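/- arXiv:1006.0788 — 5 statements merged into one kernel-verified Lean document; each statement's English description precedes it below -/
import Mathlib

section
/- (Theorem 6.8(ii), half-turn symmetry in dimension d > 4.) Let d > 4, let G be a finite simple graph with |E| = d|V| − (d+1 choose 2), let C ∈ O(d) be a half-turn (an orthogonal involution of ℝ^d whose fixed subspace has dimension d − 2), S = {I, C}, and let Φ : S → Aut(G) be a homomorphism with j_C > b_C/(d−4) + (d(d−7)+8)/(2(d−4)), where j_C is the number of vertices fixed by Φ(C) and b_C the number of edges fixed setwise by Φ(C). Let (G,p) be an S-symmetric framework of type Φ in ℝ^d whose points p_i affinely span ℝ^d and which admits no nonzero fully (S,Φ)-symmetric self-stress (this last hypothesis playing the role of the paper's '(S,Φ)-generic' assumption, as licensed by Remark 6.2). Then (G,p) has a finite flex preserving the symmetry throughout the path. -/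
open scoped Classical

noncomputable section

abbrev Euc (d : ℕ) : Type := EuclideanSpace ℝ (Fin d)

/-- The subspace of points of `ℝ^d` fixed by a linear isometry (orthogonal transformation). -/
def fixedSpace {d : ℕ} (x : Euc d ≃ₗᵢ[ℝ] Euc d) : Submodule ℝ (Euc d) :=
  LinearMap.ker (x.toLinearEquiv.toLinearMap - LinearMap.id)

/-!
The squared edge lengths define a smooth map on the linear space `X` of symmetric configurations,
with values in the invariant functions on the edges. Its derivative at `p` is, up to a factor `2`,
the rigidity matrix `R`, and `Rᵀ` sends a stress to its resultant forces. With no invariant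
self-stress, `R Rᵀ` is injective on the invariant edge functions, so `R` maps `X` onto them; by the
implicit function theorem every symmetric infinitesimal motion at `p` is then the initial velocity
of a curve in `X` along which all edge lengths are constant.

Such a curve is a flex as soon as its initial velocity changes some distance to first order. The
symmetric motions that change none come from the skew maps commuting with the symmetry `C` and the
translations it fixes. If `m` is the dimension of the fixed space of `C` and `k` that of its
orthogonal complement, they form a space of dimension at most `m(m+1)/2 + k(k-1)/2`. The dimensions
of `X` and of the invariant edge functions are read off from the traces of the two involutions, and
for `(m, k) = (d - 2, 2)` the hypothesis on `j_C` says precisely that `R` has a kernel in `X` larger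
than that bound.
-/

section LinearAlgebra

theorem two_mul_finrank_fixedSubmodule {K W : Type*} [Field K] [NeZero (2 : K)]
    [AddCommGroup W] [Module K W] [FiniteDimensional K W] {T : W →ₗ[K] W}
    (hT : Function.Involutive T) :
    2 * (Module.finrank K T.fixedSubmodule : K) = Module.finrank K W + LinearMap.trace K W T := by
  have hproj : LinearMap.IsProj T.fixedSubmodule ((2 : K)⁻¹ • (LinearMap.id + T)) := by
    refine ⟨fun x => ?_, fun x hx => ?_⟩
    · simp [hT x, add_comm]
    · rw [LinearMap.smul_apply, LinearMap.add_apply, LinearMap.id_apply,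
        LinearMap.mem_fixedSubmodule_iff.1 hx, ← two_smul K, inv_smul_smul₀ two_ne_zero]
  rw [← hproj.trace, map_smul, map_add, LinearMap.trace_id, smul_eq_mul,
    mul_inv_cancel_left₀ two_ne_zero]

theorem trace_compLeft_comp_funLeft {R M ι : Type*} [CommRing R] [AddCommGroup M] [Module R M]
    [Module.Free R M] [Module.Finite R M] [Fintype ι] [DecidableEq ι] (f : M →ₗ[R] M)
    (σ : ι → ι) :
    LinearMap.trace R (ι → M) (f.compLeft ι ∘ₗ LinearMap.funLeft R M σ) =
      (Finset.univ.filter fun i => σ i = i).card * LinearMap.trace R M f := by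
  let b := Module.Free.chooseBasis R M
  rw [LinearMap.trace_eq_matrix_trace R (Pi.basis fun _ : ι => b),
    LinearMap.trace_eq_matrix_trace R b]
  simp only [Matrix.trace, Matrix.diag, LinearMap.toMatrix_apply, Fintype.sum_sigma,
    Finset.cast_card, Finset.sum_mul, Finset.sum_filter]
  refine Finset.sum_congr rfl fun i _ => ?_
  split_ifs with h <;> simp [Pi.basis_apply, h]

theorem finrank_map_add_finrank_inf_ker {K M N : Type*} [Field K] [AddCommGroup M] [Module K M]
    [AddCommGroup N] [Module K N] (S : Submodule K M) [FiniteDimensional K S] (f : M →ₗ[K] N) :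
    Module.finrank K (S.map f) + Module.finrank K ↥(S ⊓ LinearMap.ker f) =
      Module.finrank K S := by
  rw [← (f.domRestrict S).finrank_range_add_finrank_ker, LinearMap.range_domRestrict,
    ← Submodule.map_comap_subtype, Submodule.finrank_map_subtype_eq]
  rfl

theorem finrank_submodule_prod_le {K M N : Type*} [Field K] [AddCommGroup M] [Module K M]
    [AddCommGroup N] [Module K N] (P : Submodule K M) (Q : Submodule K N)
    [FiniteDimensional K P] [FiniteDimensional K Q] :
    Module.finrank K ↥(P.prod Q) ≤ Module.finrank K P + Module.finrank K Q := by
  have hrange : P.prod Q = LinearMap.range (P.subtype.prodMap Q.subtype) := by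
    rw [LinearMap.range_prodMap, P.range_subtype, Q.range_subtype]
  rw [hrange, ← Module.finrank_prod]
  exact LinearMap.finrank_range_le _

end LinearAlgebra

section SkewAdjoint

variable {E : Type*} [NormedAddCommGroup E] [InnerProductSpace ℝ E]

theorem mem_skewAdjointSubmodule_innerₗ {A : Module.End ℝ E} :
    A ∈ (innerₗ E).skewAdjointSubmodule ↔ ∀ x y, inner ℝ (A x) y = -inner ℝ x (A y) := by
  simp [LinearMap.IsSkewAdjoint, LinearMap.IsAdjointPair]

theorem finrank_skewAdjointSubmodule_innerₗ_le [FiniteDimensional ℝ E] :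
    Module.finrank ℝ (innerₗ E).skewAdjointSubmodule ≤ (Module.finrank ℝ E).choose 2 := by
  let b := stdOrthonormalBasis ℝ E
  let entriesAboveDiagonal : Module.End ℝ E →ₗ[ℝ]
      ({x : Fin (Module.finrank ℝ E) × Fin (Module.finrank ℝ E) // x.1 < x.2} → ℝ) :=
    LinearMap.pi fun x => innerₗ E (b x.1.1) ∘ₗ LinearMap.applyₗ (b x.1.2)
  have hinj : Function.Injective
      (entriesAboveDiagonal ∘ₗ (innerₗ E).skewAdjointSubmodule.subtype) := by
    rw [injective_iff_map_eq_zero]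
    rintro ⟨A, hA⟩ hA0
    rw [mem_skewAdjointSubmodule_innerₗ] at hA
    have hskew : ∀ i j, inner ℝ (b i) (A (b j)) = -inner ℝ (b j) (A (b i)) := fun i j => by
      rw [real_inner_comm, hA]
    have hlt : ∀ i j, i < j → inner ℝ (b i) (A (b j)) = 0 := fun i j hij =>
      congrFun hA0 ⟨(i, j), hij⟩
    have hentry : ∀ i j, inner ℝ (b i) (A (b j)) = 0 := fun i j => by
      rcases lt_trichotomy i j with hij | rfl | hji
      · exact hlt i j hij
      · linarith [hskew i i]
      · rw [hskew, hlt j i hji, neg_zero]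
    ext1
    exact b.toBasis.ext fun j =>
      InnerProductSpace.ext_inner_left_basis b.toBasis fun i => by simpa using hentry i j
  calc Module.finrank ℝ (innerₗ E).skewAdjointSubmodule
      ≤ Fintype.card {x : Fin (Module.finrank ℝ E) × Fin (Module.finrank ℝ E) // x.1 < x.2} := by
        simpa only [Module.finrank_fintype_fun_eq_card] using
          LinearMap.finrank_le_finrank_of_injective hinj
    _ = (Module.finrank ℝ E).choose 2 := by
        rw [Fintype.card_subtype, Fintype.card_product_filter_lt, Fintype.card_fin]

theorem apply_mem_orthogonal_of_skewAdjoint {U : Submodule ℝ E} {A : Module.End ℝ E}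
    (hA : A ∈ (innerₗ E).skewAdjointSubmodule)
    (hU : ∀ x ∈ U, A x ∈ U) : ∀ x ∈ Uᗮ, A x ∈ Uᗮ := fun x hx y hy => by
  have h := mem_skewAdjointSubmodule_innerₗ.1 hA y x
  rwa [hx _ (hU y hy), zero_eq_neg] at h

/-- The compression of an endomorphism to a subspace: restrict, then project orthogonally back.
Unlike restriction to an invariant subspace, it is linear in the endomorphism without side
conditions. -/
def compression (U : Submodule ℝ E) [U.HasOrthogonalProjection] :
    Module.End ℝ E →ₗ[ℝ] Module.End ℝ U where
  toFun A := U.orthogonalProjectionOnto.toLinearMap ∘ₗ A ∘ₗ U.subtype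
  map_add' A B := by ext; simp
  map_smul' c A := by ext; simp

variable {U : Submodule ℝ E} [U.HasOrthogonalProjection] {A : Module.End ℝ E}

theorem inner_compression_left (x y : U) :
    inner ℝ (compression U A x) y = inner ℝ (A x) (y : E) := by
  simp [compression]

theorem compression_mem_skewAdjointSubmodule (hA : A ∈ (innerₗ E).skewAdjointSubmodule) :
    compression U A ∈ (innerₗ U).skewAdjointSubmodule := by
  rw [mem_skewAdjointSubmodule_innerₗ] at hA ⊢
  intro x y
  rw [inner_compression_left, hA, real_inner_comm (compression U A y), inner_compression_left,
    real_inner_comm]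

theorem apply_eq_zero_of_compression_eq_zero (hU : ∀ x ∈ U, A x ∈ U)
    (hA : compression U A = 0) : ∀ x ∈ U, A x = 0 := fun x hx => by
  have h : U.orthogonalProjectionOnto (A x) = 0 := LinearMap.congr_fun hA ⟨x, hx⟩
  rw [Submodule.orthogonalProjectionOnto_eq_zero_iff] at h
  exact Submodule.disjoint_def.1 U.orthogonal_disjoint _ (hU x hx) h

/-- The skew-adjoint endomorphisms commuting with `T`: for an isometry `T`, the infinitesimal
rotations compatible with the symmetry `T`. -/
def commutingSkewMaps (T : Module.End ℝ E) : Submodule ℝ (Module.End ℝ E) :=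
  (innerₗ E).skewAdjointSubmodule ⊓ (Subalgebra.centralizer ℝ {T}).toSubmodule

theorem mem_commutingSkewMaps {T A : Module.End ℝ E} :
    A ∈ commutingSkewMaps T ↔
      A ∈ (innerₗ E).skewAdjointSubmodule ∧ ∀ x, T (A x) = A (T x) := by
  refine and_congr_right fun _ => ?_
  simp only [SetLike.mem_coe, Subalgebra.mem_toSubmodule,
    Subalgebra.mem_centralizer_iff, Set.mem_singleton_iff, forall_eq]
  exact LinearMap.ext_iff

theorem finrank_commutingSkewMaps_le [FiniteDimensional ℝ E] (T : Module.End ℝ E) :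
    Module.finrank ℝ (commutingSkewMaps T) ≤
      (Module.finrank ℝ T.fixedSubmodule).choose 2 +
        (Module.finrank ℝ T.fixedSubmoduleᗮ).choose 2 := by
  let U := T.fixedSubmodule
  let compressions : commutingSkewMaps T →ₗ[ℝ]
      (innerₗ U).skewAdjointSubmodule × (innerₗ Uᗮ).skewAdjointSubmodule :=
    ((compression U).restrict fun A hA =>
        compression_mem_skewAdjointSubmodule (mem_commutingSkewMaps.1 hA).1).prod
      ((compression Uᗮ).restrict fun A hA =>
        compression_mem_skewAdjointSubmodule (mem_commutingSkewMaps.1 hA).1)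
  have hinj : Function.Injective compressions := by
    rw [injective_iff_map_eq_zero]
    rintro ⟨A, hA⟩ hA0
    obtain ⟨hskew, hcomm⟩ := mem_commutingSkewMaps.1 hA
    have hAU : ∀ x ∈ U, A x ∈ U := fun x hx => by
      rw [LinearMap.mem_fixedSubmodule_iff] at hx ⊢
      rw [hcomm, hx]
    have hzero : ∀ x ∈ U, A x = 0 := apply_eq_zero_of_compression_eq_zero hAU
      (congrArg Subtype.val (congrArg Prod.fst hA0))
    have hzero' : ∀ x ∈ Uᗮ, A x = 0 := apply_eq_zero_of_compression_eq_zero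
      (apply_mem_orthogonal_of_skewAdjoint hskew hAU)
      (congrArg Subtype.val (congrArg Prod.snd hA0))
    ext x
    obtain ⟨y, hy, z, hz, rfl⟩ := U.exists_add_mem_mem_orthogonal x
    simp [hzero y hy, hzero' z hz]
  calc Module.finrank ℝ (commutingSkewMaps T)
      ≤ Module.finrank ℝ (innerₗ U).skewAdjointSubmodule +
          Module.finrank ℝ (innerₗ Uᗮ).skewAdjointSubmodule := by
        simpa only [Module.finrank_prod] using LinearMap.finrank_le_finrank_of_injective hinj
    _ ≤ _ := add_le_add finrank_skewAdjointSubmodule_innerₗ_le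
        finrank_skewAdjointSubmodule_innerₗ_le

end SkewAdjoint

theorem exists_skewAdjoint_map_eq {E ι : Type*} [NormedAddCommGroup E] [InnerProductSpace ℝ E]
    {x y : ι → E}
    (hspan : Submodule.span ℝ (Set.range x) = ⊤)
    (hxy : ∀ i j, inner ℝ (x i) (y j) = -inner ℝ (x j) (y i)) :
    ∃ A ∈ (innerₗ E).skewAdjointSubmodule, ∀ i, A (x i) = y i := by
  let X := Finsupp.linearCombination ℝ x
  let Y := Finsupp.linearCombination ℝ y
  have hX : LinearMap.range X = ⊤ := by rw [Finsupp.range_linearCombination, hspan]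
  have hXY : ∀ c e, inner ℝ (X c) (Y e) = -inner ℝ (X e) (Y c) := by
    have hforms : (innerₗ E).compl₁₂ X Y = -((innerₗ E).compl₁₂ X Y).flip := by
      ext i j
      simp [X, Y, hxy i j]
    exact fun c e => LinearMap.congr_fun₂ hforms c e
  have hker : ∀ c, X c = 0 → Y c = 0 := fun c hc => by
    refine ext_inner_left ℝ fun z => ?_
    obtain ⟨e, rfl⟩ := LinearMap.range_eq_top.1 hX z
    rw [hXY, hc, inner_zero_left, neg_zero, inner_zero_right]
  obtain ⟨s, hs⟩ := X.exists_rightInverse_of_surjective hX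
  have hXs : ∀ z, X (s z) = z := LinearMap.congr_fun hs
  have hYs : ∀ c, Y (s (X c)) = Y c := fun c => by
    rw [← sub_eq_zero, ← map_sub]
    exact hker _ (by rw [map_sub, hXs, sub_self])
  refine ⟨Y ∘ₗ s, mem_skewAdjointSubmodule_innerₗ.2 fun z w => ?_, fun i => ?_⟩
  · have h := hXY (s w) (s z)
    rwa [hXs, hXs, real_inner_comm] at h
  · simpa [X, Y] using hYs (Finsupp.single i 1)

theorem exists_curve_in_fiber_of_surjective {X Z : Type*} [NormedAddCommGroup X] [NormedSpace ℝ X]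
    [CompleteSpace X] [NormedAddCommGroup Z] [NormedSpace ℝ Z] [FiniteDimensional ℝ Z]
    {f : X → Z} {f' : X →L[ℝ] Z} {a v : X} (hf : HasStrictFDerivAt f f' a)
    (hsurj : f'.range = ⊤) (hv : f' v = 0) :
    ∃ γ : ℝ → X, γ 0 = a ∧ HasDerivAt γ v 0 ∧
      ∀ᶠ t in nhds 0, ContinuousAt γ t ∧ f (γ t) = f a := by
  let ψ := hf.implicitFunction f f' hsurj (f a)
  have hψ : HasStrictFDerivAt ψ f'.ker.subtypeL 0 := hf.to_implicitFunction hsurj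
  have hψ_fiber : ∀ᶠ y in nhds 0, f (ψ y) = f a :=
    ((Continuous.prodMk_right (f a)).tendsto _).eventually (hf.map_implicitFunction_eq hsurj)
  have hψ_cont : ∀ᶠ y in nhds 0, ContinuousAt ψ y := by
    obtain ⟨_, s, hs, hlip⟩ := hψ.exists_lipschitzOnWith
    exact (eventually_mem_nhds_iff.2 hs).mono fun y hy => hlip.continuousOn.continuousAt hy
  let line : ℝ →L[ℝ] f'.ker := ContinuousLinearMap.toSpanSingleton ℝ ⟨v, hv⟩
  have hline : Filter.Tendsto line (nhds 0) (nhds 0) := by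
    simpa only [map_zero] using line.continuous.tendsto 0
  refine ⟨ψ ∘ line, ?_, ?_, ?_⟩
  · rw [Function.comp_apply, map_zero]
    exact hf.implicitFunction_apply_image hsurj
  · have hψ' : HasFDerivAt ψ f'.ker.subtypeL (line 0) := by
      simpa only [map_zero] using hψ.hasFDerivAt
    simpa [line] using hψ'.comp_hasDerivAt 0 line.hasDerivAt
  · filter_upwards [hline.eventually hψ_fiber, hline.eventually hψ_cont] with t hft hct
    exact ⟨hct.comp line.continuous.continuousAt, hft⟩

theorem exists_curve_in_fiber_of_mem_range {X Z : Type*} [NormedAddCommGroup X] [NormedSpace ℝ X]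
    [CompleteSpace X] [NormedAddCommGroup Z] [NormedSpace ℝ Z] [FiniteDimensional ℝ Z]
    {f : X → Z} {f' : X →L[ℝ] Z} {a v : X} (hf : HasStrictFDerivAt f f' a)
    (hrange : ∀ x, f x ∈ f'.range) (hv : f' v = 0) :
    ∃ γ : ℝ → X, γ 0 = a ∧ HasDerivAt γ v 0 ∧
      ∀ᶠ t in nhds 0, ContinuousAt γ t ∧ f (γ t) = f a := by
  obtain ⟨π, hπ⟩ := Submodule.ClosedComplemented.of_finiteDimensional (𝕜 := ℝ) f'.range
  have hsurj : (π.comp f').range = ⊤ := by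
    rw [eq_top_iff]
    rintro ⟨_, x, rfl⟩ -
    exact ⟨x, hπ ⟨f' x, x, rfl⟩⟩
  obtain ⟨γ, hγ0, hγ', hγ⟩ := exists_curve_in_fiber_of_surjective (v := v)
    (π.hasStrictFDerivAt.comp a hf) hsurj (by simp [hv])
  refine ⟨γ, hγ0, hγ', hγ.mono fun t ht => ⟨ht.1, ?_⟩⟩
  have hπf : ∀ x, (π (f x) : Z) = f x := fun x => congrArg Subtype.val (hπ ⟨f x, hrange x⟩)
  exact (hπf _).symm.trans ((congrArg Subtype.val ht.2).trans (hπf a))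

section Framework

variable {V E : Type*} [NormedAddCommGroup E] [InnerProductSpace ℝ E]

/-- The configurations `q` of the vertices in `E` compatible with the symmetry: `C` moves the point
`q i` to `q (σ i)`. They are written as the fixed points of the linear map `q ↦ C⁻¹ ∘ q ∘ σ`. -/
def symmetricConfigurations (C : E ≃ₗᵢ[ℝ] E) (σ : V → V) : Submodule ℝ (V → E) :=
  ((C.symm.toLinearEquiv : E →ₗ[ℝ] E).compLeft V ∘ₗ LinearMap.funLeft ℝ E σ).fixedSubmodule

variable {C : E ≃ₗᵢ[ℝ] E} {σ : V → V} {p q : V → E}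

theorem mem_symmetricConfigurations :
    q ∈ symmetricConfigurations C σ ↔ ∀ i, C (q i) = q (σ i) := by
  rw [symmetricConfigurations, LinearMap.mem_fixedSubmodule_iff, funext_iff]
  exact forall_congr' fun i => C.symm_apply_eq.trans eq_comm

/-- The polarised squared length `⟪p i - p j, q i - q j⟫` of all pairs of vertices. For a velocity
field `q` it is half the rate of change of the squared distances at `p`, so the kernel of
`edgeForm p` consists of the velocity fields that preserve all distances to first order. -/
def edgeForm (p : V → E) : (V → E) →ₗ[ℝ] (Sym2 V → ℝ) where
  toFun q := Sym2.lift ⟨fun i j => inner ℝ (p i - p j) (q i - q j), fun i j => by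
    beta_reduce
    rw [← neg_sub (p j), ← neg_sub (q j), inner_neg_neg]⟩
  map_add' q r := by
    ext ⟨i, j⟩
    simp [add_sub_add_comm, inner_add_right]
  map_smul' c q := by
    ext ⟨i, j⟩
    simp [← smul_sub, real_inner_smul_right]

theorem edgeForm_mk (p q : V → E) (i j : V) :
    edgeForm p q s(i, j) = inner ℝ (p i - p j) (q i - q j) :=
  rfl

theorem edgeForm_self_mk (p : V → E) (i j : V) : edgeForm p p s(i, j) = ‖p i - p j‖ ^ 2 := by
  rw [edgeForm_mk, real_inner_self_eq_norm_sq]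

theorem edgeForm_map (hp : p ∈ symmetricConfigurations C σ) (hq : q ∈ symmetricConfigurations C σ)
    (e : Sym2 V) : edgeForm p q (e.map σ) = edgeForm p q e := by
  rw [mem_symmetricConfigurations] at hp hq
  induction e with
  | _ i j =>
    rw [Sym2.map_mk, edgeForm_mk, edgeForm_mk, ← hp, ← hp, ← hq, ← hq, ← map_sub, ← map_sub,
      LinearIsometryEquiv.inner_map_map]

section TrivialMotions

/-- The velocity field `i ↦ A (p i) + t` at the configuration `p`; for skew-adjoint `A` these are
the restrictions of the infinitesimal isometries of `E`. -/
def affineVelocity (p : V → E) : (Module.End ℝ E × E) →ₗ[ℝ] (V → E) :=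
  LinearMap.pi fun i => (LinearMap.applyₗ (p i)).coprod LinearMap.id

theorem affineVelocity_apply (p : V → E) (A : Module.End ℝ E) (t : E) (i : V) :
    affineVelocity p (A, t) i = A (p i) + t :=
  rfl

theorem inner_sub_eq_neg_of_edgeForm_eq_zero {v : V → E} (hv : edgeForm p v = 0) (o i j : V) :
    inner ℝ (p i - p o) (v j - v o) = -inner ℝ (p j - p o) (v i - v o) := by
  have hzero : ∀ i j, inner ℝ (p i - p j) (v i - v j) = 0 := fun i j => by
    rw [← edgeForm_mk, hv, Pi.zero_apply]
  have hij := hzero i j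
  rw [← sub_sub_sub_cancel_right (p i) (p j) (p o), ← sub_sub_sub_cancel_right (v i) (v j) (v o),
    inner_sub_left, inner_sub_right (p i - p o), inner_sub_right (p j - p o), hzero i o,
    hzero j o] at hij
  linarith

theorem span_range_sub_eq_top (hspan : affineSpan ℝ (Set.range p) = ⊤) (o : V) :
    Submodule.span ℝ (Set.range fun i => p i - p o) = ⊤ := by
  have h := AffineSubspace.vectorSpan_eq_top_of_affineSpan_eq_top ℝ _ _ hspan
  rwa [vectorSpan_range_eq_span_range_vsub_right ℝ p o] at h

theorem exists_skewAdjoint_sub_eq_sub {v : V → E} (hspan : affineSpan ℝ (Set.range p) = ⊤)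
    (hv : edgeForm p v = 0) :
    ∃ A ∈ (innerₗ E).skewAdjointSubmodule, ∀ i j, A (p i) - A (p j) = v i - v j := by
  rcases isEmpty_or_nonempty V with _ | ⟨⟨o⟩⟩
  · exact ⟨0, zero_mem _, isEmptyElim⟩
  obtain ⟨A, hA, hAo⟩ := exists_skewAdjoint_map_eq (span_range_sub_eq_top hspan o)
    (inner_sub_eq_neg_of_edgeForm_eq_zero hv o)
  refine ⟨A, hA, fun i j => ?_⟩
  rw [← sub_sub_sub_cancel_right (A (p i)) _ (A (p o)), ← map_sub, ← map_sub, hAo, hAo,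
    sub_sub_sub_cancel_right]

theorem symmetricConfigurations_inf_ker_edgeForm_le (hspan : affineSpan ℝ (Set.range p) = ⊤)
    (hp : p ∈ symmetricConfigurations C σ) :
    symmetricConfigurations C σ ⊓ LinearMap.ker (edgeForm p) ≤
      ((commutingSkewMaps (C.toLinearEquiv : E →ₗ[ℝ] E)).prod
        (C.toLinearEquiv : E →ₗ[ℝ] E).fixedSubmodule).map (affineVelocity p) := by
  rintro v ⟨hv, hv0⟩
  rw [SetLike.mem_coe, mem_symmetricConfigurations] at hv
  rw [mem_symmetricConfigurations] at hp
  obtain ⟨A, hA, hAsub⟩ := exists_skewAdjoint_sub_eq_sub hspan hv0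
  obtain ⟨o⟩ : Nonempty V := by
    rw [← Set.range_nonempty_iff_nonempty (f := p), ← affineSpan_nonempty ℝ, hspan]
    exact Set.univ_nonempty
  have hcomm : ∀ x, C (A x) = A (C x) := by
    refine LinearMap.congr_fun (f := (C.toLinearEquiv : E →ₗ[ℝ] E) ∘ₗ A)
      (g := A ∘ₗ (C.toLinearEquiv : E →ₗ[ℝ] E))
      (LinearMap.ext_on_range (span_range_sub_eq_top hspan o) fun i => ?_)
    change C (A (p i - p o)) = A (C (p i - p o))
    rw [map_sub C, hp, hp, map_sub A, map_sub A, hAsub, hAsub, map_sub, hv, hv]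
  refine ⟨(A, v o - A (p o)), ⟨mem_commutingSkewMaps.2 ⟨hA, hcomm⟩, ?_⟩, funext fun i => ?_⟩
  · rw [SetLike.mem_coe, LinearMap.mem_fixedSubmodule_iff]
    change C (v o - A (p o)) = v o - A (p o)
    rw [map_sub, hcomm, hp, hv, sub_eq_sub_iff_sub_eq_sub, hAsub]
  · rw [affineVelocity_apply, add_sub_left_comm, hAsub, add_sub_cancel]

theorem finrank_symmetricConfigurations_inf_ker_edgeForm_le [FiniteDimensional ℝ E] {m k : ℕ}
    (hspan : affineSpan ℝ (Set.range p) = ⊤) (hp : p ∈ symmetricConfigurations C σ)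
    (hm : Module.finrank ℝ (C.toLinearEquiv : E →ₗ[ℝ] E).fixedSubmodule = m)
    (hk : Module.finrank ℝ ↥(C.toLinearEquiv : E →ₗ[ℝ] E).fixedSubmoduleᗮ = k) :
    Module.finrank ℝ ↥(symmetricConfigurations C σ ⊓ LinearMap.ker (edgeForm p)) ≤
      (m + 1).choose 2 + k.choose 2 := by
  calc Module.finrank ℝ ↥(symmetricConfigurations C σ ⊓ LinearMap.ker (edgeForm p))
      ≤ Module.finrank ℝ ↥((commutingSkewMaps (C.toLinearEquiv : E →ₗ[ℝ] E)).prod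
          (C.toLinearEquiv : E →ₗ[ℝ] E).fixedSubmodule) :=
        (Submodule.finrank_mono (symmetricConfigurations_inf_ker_edgeForm_le hspan hp)).trans
          (Submodule.finrank_map_le _ _)
    _ ≤ Module.finrank ℝ (commutingSkewMaps (C.toLinearEquiv : E →ₗ[ℝ] E)) + m :=
        hm ▸ finrank_submodule_prod_le _ _
    _ ≤ m.choose 2 + k.choose 2 + m := by
        gcongr
        exact hm ▸ hk ▸ finrank_commutingSkewMaps_le _
    _ = (m + 1).choose 2 + k.choose 2 := by
        rw [Nat.choose_succ_succ' m 1, Nat.choose_one_right]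
        ring

end TrivialMotions

section Stress

variable (G : SimpleGraph V)

/-- The rigidity matrix of the framework `(G, p)` as a linear map: `edgeForm p` restricted to the
edges of `G`. -/
def rigidityMap (p : V → E) : (V → E) →ₗ[ℝ] (G.edgeSet → ℝ) :=
  LinearMap.funLeft ℝ ℝ Subtype.val ∘ₗ edgeForm p

theorem rigidityMap_apply (p q : V → E) (e : G.edgeSet) : rigidityMap G p q e = edgeForm p q e :=
  rfl

variable {G}

/-- The functions on the edges of `G` that are invariant under a graph automorphism `φ`. -/
def invariantEdgeFunctions (φ : G ≃g G) : Submodule ℝ (G.edgeSet → ℝ) :=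
  (LinearMap.funLeft ℝ ℝ φ.mapEdgeSet).fixedSubmodule

theorem mem_invariantEdgeFunctions {φ : G ≃g G} {y : G.edgeSet → ℝ} :
    y ∈ invariantEdgeFunctions φ ↔ ∀ e, y (φ.mapEdgeSet e) = y e := by
  rw [invariantEdgeFunctions, LinearMap.mem_fixedSubmodule_iff, funext_iff]
  rfl

theorem rigidityMap_mem_invariantEdgeFunctions {φ : G ≃g G}
    (hp : p ∈ symmetricConfigurations C φ) (hq : q ∈ symmetricConfigurations C φ) :
    rigidityMap G p q ∈ invariantEdgeFunctions φ :=
  mem_invariantEdgeFunctions.2 fun e => edgeForm_map hp hq e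

/-- Extension of a function on the edges of `G` to all pairs of vertices by zero. -/
def extendEdgeFunction (G : SimpleGraph V) : (G.edgeSet → ℝ) →ₗ[ℝ] (Sym2 V → ℝ) :=
  Function.ExtendByZero.linearMap ℝ Subtype.val

theorem extendEdgeFunction_apply (y : G.edgeSet → ℝ) (e : G.edgeSet) :
    extendEdgeFunction G y e = y e :=
  Subtype.val_injective.extend_apply y 0 e

variable [Fintype V] [DecidableRel G.Adj]

/-- The resultant at each vertex of the edge forces `ω s(i, j) • (p i - p j)`; a self-stress of
`(G, p)` is an `ω` with `vertexForce G p ω = 0`. The values of `ω` off the edges of `G` play no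
role. -/
def vertexForce (G : SimpleGraph V) [DecidableRel G.Adj] (p : V → E) :
    (Sym2 V → ℝ) →ₗ[ℝ] (V → E) where
  toFun ω i := ∑ j ∈ G.neighborFinset i, ω s(i, j) • (p i - p j)
  map_add' ω χ := by
    ext i
    simp [add_smul, Finset.sum_add_distrib]
  map_smul' c ω := by
    ext i
    simp [mul_smul, Finset.smul_sum]

theorem vertexForce_apply (p : V → E) (ω : Sym2 V → ℝ) (i : V) :
    vertexForce G p ω i = ∑ j ∈ G.neighborFinset i, ω s(i, j) • (p i - p j) :=
  rfl

theorem vertexForce_mem_symmetricConfigurations {φ : G ≃g G} {ω : Sym2 V → ℝ}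
    (hp : p ∈ symmetricConfigurations C φ) (hω : ∀ e ∈ G.edgeSet, ω (e.map φ) = ω e) :
    vertexForce G p ω ∈ symmetricConfigurations C φ := by
  rw [mem_symmetricConfigurations] at hp ⊢
  intro i
  rw [vertexForce_apply, vertexForce_apply, map_sum]
  refine Finset.sum_equiv φ.toEquiv (fun j => by simp [φ.map_adj_iff]) fun j hj => ?_
  rw [map_smul, map_sub, hp, hp, ← hω s(i, j) (by simpa using hj)]
  rfl

/-- The framework `(G, p)` has no nonzero self-stress that is invariant under `σ`. -/
def IsSymmetricallyStressFree (G : SimpleGraph V) [DecidableRel G.Adj] (σ : V → V) (p : V → E) :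
    Prop :=
  ∀ ω : Sym2 V → ℝ, vertexForce G p ω = 0 → (∀ e ∈ G.edgeSet, ω (e.map σ) = ω e) →
    ∀ e ∈ G.edgeSet, ω e = 0

theorem sum_neighborFinset_eq_sum_edgeSet {M : Type*} [AddCommMonoid M] {f : V → V → M}
    {g : Sym2 V → M} (hfg : ∀ i j, G.Adj i j → f i j + f j i = g s(i, j)) :
    ∑ i, ∑ j ∈ G.neighborFinset i, f i j = ∑ e : G.edgeSet, g e := by
  have := Classical.decEq V
  have hvertex : ∀ i, ∑ j ∈ G.neighborFinset i, f i j =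
      ∑ a : G.Dart with a.fst = i, f a.fst a.snd := fun i => by
    rw [G.dart_fst_fiber, Finset.sum_image (G.dartOfNeighborSet_injective i).injOn]
    exact (Finset.sum_subtype _ (fun j => by simp) (f i))
  have hedge : ∀ e : G.edgeSet,
      ∑ a : G.Dart with (⟨a.edge, a.edge_mem⟩ : G.edgeSet) = e, f a.fst a.snd = g e := by
    rintro ⟨⟨i, j⟩, hij⟩
    let a : G.Dart := ⟨(i, j), hij⟩
    have hfiber : (Finset.univ.filter fun b : G.Dart =>
        (⟨b.edge, b.edge_mem⟩ : G.edgeSet) = ⟨s(i, j), hij⟩) = {a, a.symm} := by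
      rw [← a.edge_fiber]
      exact Finset.filter_congr fun b _ => Subtype.ext_iff
    rw [hfiber, Finset.sum_pair a.symm_ne.symm]
    exact hfg i j hij
  simp only [hvertex, ← hedge]
  rw [Finset.sum_fiberwise, Finset.sum_fiberwise]

-- The principle of virtual work: `vertexForce G p` is the transpose of the rigidity matrix.
theorem sum_inner_vertexForce (p q : V → E) (ω : Sym2 V → ℝ) :
    ∑ i, inner ℝ (vertexForce G p ω i) (q i) = ∑ e : G.edgeSet, ω e * rigidityMap G p q e := by
  simp only [vertexForce_apply, sum_inner, real_inner_smul_left]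
  refine sum_neighborFinset_eq_sum_edgeSet (g := fun e => ω e * edgeForm p q e) fun i j _ => ?_
  rw [edgeForm_mk, Sym2.eq_swap (a := j), ← neg_sub (p i), inner_neg_left, inner_sub_right]
  ring

-- `y ↦ R Rᵀ y` maps the invariant edge functions injectively, hence onto, themselves.
theorem map_rigidityMap_symmetricConfigurations {φ : G ≃g G}
    (hp : p ∈ symmetricConfigurations C φ) (hfree : IsSymmetricallyStressFree G φ p) :
    (symmetricConfigurations C φ).map (rigidityMap G p) = invariantEdgeFunctions φ := by
  let force : (G.edgeSet → ℝ) →ₗ[ℝ] (V → E) := vertexForce G p ∘ₗ extendEdgeFunction G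
  have hinv : ∀ y ∈ invariantEdgeFunctions φ, ∀ e ∈ G.edgeSet,
      extendEdgeFunction G y (e.map φ) = extendEdgeFunction G y e := fun y hy e he => by
    rw [extendEdgeFunction_apply y ⟨e, he⟩, ← mem_invariantEdgeFunctions.1 hy ⟨e, he⟩]
    exact extendEdgeFunction_apply y (φ.mapEdgeSet ⟨e, he⟩)
  have hforce : ∀ y ∈ invariantEdgeFunctions φ, force y ∈ symmetricConfigurations C φ :=
    fun y hy => vertexForce_mem_symmetricConfigurations hp (hinv y hy)
  let gram : invariantEdgeFunctions φ →ₗ[ℝ] invariantEdgeFunctions φ :=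
    (rigidityMap G p ∘ₗ force).restrict fun y hy =>
      rigidityMap_mem_invariantEdgeFunctions hp (hforce y hy)
  have hinj : Function.Injective gram := by
    rw [injective_iff_map_eq_zero]
    rintro ⟨y, hy⟩ hy0
    have hgram : rigidityMap G p (force y) = 0 := congrArg Subtype.val hy0
    have hsum : ∑ i, inner ℝ (force y i) (force y i) = 0 :=
      (sum_inner_vertexForce p (force y) _).trans (by simp [hgram])
    have hzero : force y = 0 := funext fun i => by
      rw [Fintype.sum_eq_zero_iff_of_nonneg fun i => real_inner_self_nonneg] at hsum
      exact inner_self_eq_zero.1 (congrFun hsum i)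
    ext e
    exact (extendEdgeFunction_apply y e).symm.trans (hfree _ hzero (hinv y hy) e e.2)
  refine le_antisymm ?_ fun y hy => ?_
  · rintro _ ⟨q, hq, rfl⟩
    exact rigidityMap_mem_invariantEdgeFunctions hp hq
  · obtain ⟨x, hx⟩ := LinearMap.injective_iff_surjective.1 hinj ⟨y, hy⟩
    exact ⟨force x, hforce x x.2, congrArg Subtype.val hx⟩

end Stress

section Flex

variable {G : SimpleGraph V}

/-- The framework `(G, p)` has a finite flex that keeps the symmetry `q ∘ σ = C ∘ q` throughout. -/
def HasSymmetricFlex (G : SimpleGraph V) (C : E ≃ₗᵢ[ℝ] E) (σ : V → V) (p : V → E) : Prop :=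
  ∃ P : ℝ → V → E,
    ContinuousOn P (Set.Icc 0 1) ∧
    P 0 = p ∧
    (∀ t ∈ Set.Icc (0 : ℝ) 1, ∀ i j : V, G.Adj i j → ‖P t i - P t j‖ = ‖p i - p j‖) ∧
    (∃ k l : V, ∀ t ∈ Set.Ioc (0 : ℝ) 1, ‖P t k - P t l‖ ≠ ‖p k - p l‖) ∧
    (∀ t ∈ Set.Icc (0 : ℝ) 1, ∀ i, C (P t i) = P t (σ i))

theorem exists_pos_forall_mem_Icc_mul {P : ℝ → Prop} (hP : ∀ᶠ t in nhds 0, P t) :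
    ∃ δ > 0, ∀ t ∈ Set.Icc (0 : ℝ) 1, P (δ * t) := by
  obtain ⟨ε, hε, hball⟩ := Metric.eventually_nhds_iff.1 hP
  refine ⟨ε / 2, half_pos hε, fun t ht => hball ?_⟩
  rw [dist_zero_right, Real.norm_of_nonneg (mul_nonneg (half_pos hε).le ht.1)]
  exact (mul_le_of_le_one_right (half_pos hε).le ht.2).trans_lt (half_lt_self hε)

variable [FiniteDimensional ℝ E]

theorem hasStrictFDerivAt_edgeForm_self [Finite V] (p : V → E) (e : Sym2 V) :
    HasStrictFDerivAt (fun q => edgeForm q q e)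
      ((2 : ℝ) • (LinearMap.proj e ∘ₗ edgeForm p).toContinuousLinearMap) p := by
  cases nonempty_fintype V
  induction e with
  | _ i j =>
    have hproj : ∀ k : V, HasStrictFDerivAt (fun q : V → E => q k)
        (ContinuousLinearMap.proj (R := ℝ) (φ := fun _ : V => E) k) p :=
      fun k => (ContinuousLinearMap.proj (R := ℝ) (φ := fun _ : V => E) k).hasStrictFDerivAt
    have hsub := (hproj i).sub (hproj j)
    refine (hsub.inner ℝ hsub).congr_fderiv ?_
    ext v
    simp [edgeForm_mk, fderivInnerCLM_apply, real_inner_comm (p i - p j), two_mul]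

theorem hasStrictFDerivAt_rigidityMap_self [Finite V] (p : V → E) :
    HasStrictFDerivAt (fun q => rigidityMap G q q)
      ((2 : ℝ) • (rigidityMap G p).toContinuousLinearMap) p := by
  cases nonempty_fintype V
  cases nonempty_fintype G.edgeSet
  exact hasStrictFDerivAt_pi'.2 fun e => hasStrictFDerivAt_edgeForm_self p e

theorem exists_symmetric_curve_of_rigidityMap_eq_zero [Fintype V] [DecidableRel G.Adj] {φ : G ≃g G}
    (hp : p ∈ symmetricConfigurations C φ) (hfree : IsSymmetricallyStressFree G φ p)
    {v : V → E} (hv : v ∈ symmetricConfigurations C φ) (hv0 : rigidityMap G p v = 0) :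
    ∃ γ : ℝ → V → E, γ 0 = p ∧ HasDerivAt γ v 0 ∧ (∀ t, γ t ∈ symmetricConfigurations C φ) ∧
      ∀ᶠ t in nhds 0, ContinuousAt γ t ∧
        rigidityMap G (γ t) (γ t) = rigidityMap G p p := by
  let X := symmetricConfigurations C φ
  have hder := (hasStrictFDerivAt_rigidityMap_self (G := G) p).comp (⟨p, hp⟩ : X)
    X.subtypeL.hasStrictFDerivAt
  have hrange : ∀ q : X, rigidityMap G (q : V → E) q ∈
      (((2 : ℝ) • (rigidityMap G p).toContinuousLinearMap).comp X.subtypeL).range := fun q => by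
    obtain ⟨x, hx, hxq⟩ : rigidityMap G (q : V → E) q ∈ X.map (rigidityMap G p) := by
      rw [map_rigidityMap_symmetricConfigurations hp hfree]
      exact rigidityMap_mem_invariantEdgeFunctions q.2 q.2
    refine ⟨(2 : ℝ)⁻¹ • ⟨x, hx⟩, ?_⟩
    simp [← hxq]
  obtain ⟨γ, hγ0, hγ', hγ⟩ := exists_curve_in_fiber_of_mem_range (v := ⟨v, hv⟩) hder hrange
    (by simp [hv0])
  exact ⟨fun t => γ t, congrArg Subtype.val hγ0,
    X.subtypeL.hasFDerivAt.comp_hasDerivAt 0 hγ', fun t => (γ t).2,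
    hγ.mono fun t ht => ⟨continuous_subtype_val.continuousAt.comp ht.1, ht.2⟩⟩

theorem eventually_edgeForm_self_ne [Finite V] {γ : ℝ → V → E} {v : V → E} (hγ0 : γ 0 = p)
    (hγ' : HasDerivAt γ v 0) {e : Sym2 V} (he : edgeForm p v e ≠ 0) :
    ∀ᶠ t in nhds 0, t ≠ 0 → edgeForm (γ t) (γ t) e ≠ edgeForm p p e := by
  cases nonempty_fintype V
  subst hγ0
  have hlen := (hasStrictFDerivAt_edgeForm_self (γ 0) e).hasFDerivAt.comp_hasDerivAt 0 hγ'
  exact eventually_nhdsWithin_iff.1 (hlen.eventually_ne (by simpa using he))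

theorem hasSymmetricFlex_of_edgeForm_ne_zero [Fintype V] [DecidableRel G.Adj] {φ : G ≃g G}
    (hp : p ∈ symmetricConfigurations C φ) (hfree : IsSymmetricallyStressFree G φ p)
    {v : V → E} (hv : v ∈ symmetricConfigurations C φ) (hv0 : rigidityMap G p v = 0)
    (hv1 : edgeForm p v ≠ 0) : HasSymmetricFlex G C φ p := by
  obtain ⟨γ, hγ0, hγ', hγsymm, hγ⟩ :=
    exists_symmetric_curve_of_rigidityMap_eq_zero hp hfree hv hv0
  obtain ⟨⟨k, l⟩, hkl⟩ := Function.ne_iff.1 hv1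
  obtain ⟨δ, hδ, hδγ⟩ := exists_pos_forall_mem_Icc_mul
    (hγ.and (eventually_edgeForm_self_ne hγ0 hγ' hkl))
  refine ⟨fun t => γ (δ * t), fun t ht => ?_, by simp [hγ0], fun t ht i j hij => ?_,
    ⟨k, l, fun t ht hlen => ?_⟩, fun t _ => mem_symmetricConfigurations.1 (hγsymm _)⟩
  · exact ((hδγ t ht).1.1.comp (continuous_const_mul δ).continuousAt).continuousWithinAt
  · have hsq := congrFun (hδγ t ht).1.2 ⟨s(i, j), hij⟩
    rw [rigidityMap_apply, rigidityMap_apply, edgeForm_self_mk, edgeForm_self_mk] at hsq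
    exact (sq_eq_sq₀ (norm_nonneg _) (norm_nonneg _)).1 hsq
  · refine (hδγ t ⟨ht.1.le, ht.2⟩).2 (mul_pos hδ ht.1).ne' ?_
    change edgeForm _ _ s(k, l) = edgeForm p p s(k, l)
    rw [edgeForm_self_mk, edgeForm_self_mk, hlen]

end Flex

section Count

variable {G : SimpleGraph V}

theorem two_mul_finrank_symmetricConfigurations [FiniteDimensional ℝ E] [Fintype V] [DecidableEq V]
    {m k : ℕ} (hC : Function.Involutive C) (hσ : Function.Involutive σ)
    (hm : Module.finrank ℝ (C.toLinearEquiv : E →ₗ[ℝ] E).fixedSubmodule = m)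
    (hk : Module.finrank ℝ ↥(C.toLinearEquiv : E →ₗ[ℝ] E).fixedSubmoduleᗮ = k) :
    2 * (Module.finrank ℝ (symmetricConfigurations C σ) : ℝ) =
      (m + k) * Fintype.card V + (m - k) * (Finset.univ.filter fun i => σ i = i).card := by
  have hE : Module.finrank ℝ E = m + k := by
    rw [← (C.toLinearEquiv : E →ₗ[ℝ] E).fixedSubmodule.finrank_add_finrank_orthogonal, hm, hk]
  have hsymm : C.symm = C := LinearIsometryEquiv.ext fun x => C.symm_apply_eq.2 (hC x).symm
  have htrace : LinearMap.trace ℝ E (C.toLinearEquiv : E →ₗ[ℝ] E) = m - k := by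
    have h := two_mul_finrank_fixedSubmodule (K := ℝ) (T := (C.toLinearEquiv : E →ₗ[ℝ] E)) hC
    rw [hm, hE, Nat.cast_add] at h
    linarith
  have hinv : Function.Involutive
      ((C.toLinearEquiv : E →ₗ[ℝ] E).compLeft V ∘ₗ LinearMap.funLeft ℝ E σ) := fun q =>
    funext fun i => (hC _).trans (congrArg q (hσ i))
  rw [symmetricConfigurations, hsymm, two_mul_finrank_fixedSubmodule hinv,
    trace_compLeft_comp_funLeft, htrace, Module.finrank_pi_fintype, Finset.sum_const,
    Finset.card_univ, smul_eq_mul, hE]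
  push_cast
  ring

theorem card_filter_mapEdgeSet_eq [Fintype V] [DecidableEq V] [DecidableRel G.Adj] (φ : G ≃g G) :
    (Finset.univ.filter fun e => φ.mapEdgeSet e = e).card =
      (G.edgeFinset.filter fun e => e.map φ = e).card := by
  refine Finset.card_bij (fun e _ => e.1) (fun e he => ?_) (fun _ _ _ _ => Subtype.ext)
    fun e he => ?_
  · rw [Finset.mem_filter] at he ⊢
    exact ⟨SimpleGraph.mem_edgeFinset.2 e.2, congrArg Subtype.val he.2⟩
  · rw [Finset.mem_filter, SimpleGraph.mem_edgeFinset] at he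
    exact ⟨⟨e, he.1⟩, Finset.mem_filter.2 ⟨Finset.mem_univ _, Subtype.ext he.2⟩, rfl⟩

theorem two_mul_finrank_invariantEdgeFunctions [Fintype V] [DecidableEq V] [DecidableRel G.Adj]
    {φ : G ≃g G} (hφ : Function.Involutive φ) :
    2 * (Module.finrank ℝ (invariantEdgeFunctions φ) : ℝ) =
      G.edgeFinset.card + (G.edgeFinset.filter fun e => e.map φ = e).card := by
  have hinv : Function.Involutive (LinearMap.funLeft ℝ ℝ φ.mapEdgeSet) := fun y =>
    funext fun e => congrArg y <| Subtype.ext <| by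
      change Sym2.map φ (Sym2.map φ e) = e
      rw [Sym2.map_map, hφ.comp_self, Sym2.map_id, id]
  have htrace := trace_compLeft_comp_funLeft (LinearMap.id : ℝ →ₗ[ℝ] ℝ) φ.mapEdgeSet
  rw [LinearMap.trace_id, Module.finrank_self, Nat.cast_one, mul_one,
    card_filter_mapEdgeSet_eq] at htrace
  rw [invariantEdgeFunctions, two_mul_finrank_fixedSubmodule hinv,
    Module.finrank_fintype_fun_eq_card, ← Set.toFinset_card, ← htrace]
  rfl

theorem exists_nontrivial_symmetric_motion [FiniteDimensional ℝ E] [Fintype V] [DecidableEq V]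
    [DecidableRel G.Adj] {φ : G ≃g G} {m k : ℕ}
    (hC : Function.Involutive C)
    (hm : Module.finrank ℝ (C.toLinearEquiv : E →ₗ[ℝ] E).fixedSubmodule = m)
    (hk : Module.finrank ℝ ↥(C.toLinearEquiv : E →ₗ[ℝ] E).fixedSubmoduleᗮ = k)
    (hφ : Function.Involutive φ) (hp : p ∈ symmetricConfigurations C φ)
    (hspan : affineSpan ℝ (Set.range p) = ⊤)
    (hcount : G.edgeFinset.card + (G.edgeFinset.filter fun e => e.map φ = e).card +
        k * (Finset.univ.filter fun i => φ i = i).card +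
        2 * ((m + 1).choose 2 + k.choose 2) <
      (m + k) * Fintype.card V + m * (Finset.univ.filter fun i => φ i = i).card) :
    ∃ v ∈ symmetricConfigurations C φ, rigidityMap G p v = 0 ∧ edgeForm p v ≠ 0 := by
  let X := symmetricConfigurations C φ
  have hrank : Module.finrank ℝ X ≤ Module.finrank ℝ (invariantEdgeFunctions φ) +
      Module.finrank ℝ ↥(X ⊓ LinearMap.ker (rigidityMap G p)) := by
    rw [← finrank_map_add_finrank_inf_ker X (rigidityMap G p)]
    gcongr
    refine Submodule.finrank_mono ?_
    rintro _ ⟨q, hq, rfl⟩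
    exact rigidityMap_mem_invariantEdgeFunctions hp hq
  have htrivial := finrank_symmetricConfigurations_inf_ker_edgeForm_le hspan hp hm hk
  have hlt : Module.finrank ℝ ↥(X ⊓ LinearMap.ker (edgeForm p)) <
      Module.finrank ℝ ↥(X ⊓ LinearMap.ker (rigidityMap G p)) := by
    have hX := two_mul_finrank_symmetricConfigurations hC hφ hm hk
    have hY := two_mul_finrank_invariantEdgeFunctions hφ
    rify at hcount hrank htrivial ⊢
    linarith
  by_contra! hcon
  exact hlt.not_ge <| Submodule.finrank_mono fun v hv => ⟨hv.1, hcon v hv.1 hv.2⟩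

theorem halfTurn_count {d n edges b j : ℕ} (hd : 4 < d)
    (hedges : edges + (d + 1).choose 2 = d * n)
    (hj : (j : ℝ) > b / ((d : ℝ) - 4) + ((d : ℝ) * ((d : ℝ) - 7) + 8) / (2 * ((d : ℝ) - 4))) :
    edges + b + 2 * j + 2 * ((d - 2 + 1).choose 2 + Nat.choose 2 2) <
      (d - 2 + 2) * n + (d - 2) * j := by
  obtain ⟨c, rfl⟩ : ∃ c, d = c + 2 := ⟨d - 2, by omega⟩
  have hd' : (0 : ℝ) < (c + 2 : ℕ) - 4 := by
    rw [sub_pos]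
    exact_mod_cast hd
  have hj' : b + (((c + 2 : ℕ) : ℝ) * ((c + 2 : ℕ) - 7) + 8) / 2 < j * (((c + 2 : ℕ) : ℝ) - 4) := by
    rw [← div_lt_iff₀ hd', add_div, div_div]
    exact hj
  rw [Nat.add_sub_cancel]
  rify at hedges ⊢
  rw [Nat.cast_choose_two] at hedges ⊢
  push_cast at hedges hj' ⊢
  norm_num
  linarith

theorem stmt_9_general [FiniteDimensional ℝ E] [Fintype V] [DecidableEq V] [DecidableRel G.Adj]
    {φ : G ≃g G} {m k : ℕ} (hC : Function.Involutive C)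
    (hm : Module.finrank ℝ (C.toLinearEquiv : E →ₗ[ℝ] E).fixedSubmodule = m)
    (hk : Module.finrank ℝ ↥(C.toLinearEquiv : E →ₗ[ℝ] E).fixedSubmoduleᗮ = k)
    (hφ : Function.Involutive φ)
    (hcount : G.edgeFinset.card + (G.edgeFinset.filter fun e => e.map φ = e).card +
        k * (Finset.univ.filter fun i => φ i = i).card +
        2 * ((m + 1).choose 2 + k.choose 2) <
      (m + k) * Fintype.card V + m * (Finset.univ.filter fun i => φ i = i).card)
    (hsymm : ∀ i, C (p i) = p (φ i)) (hspan : affineSpan ℝ (Set.range p) = ⊤)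
    (hfree : IsSymmetricallyStressFree G φ p) :
    HasSymmetricFlex G C φ p := by
  have hp : p ∈ symmetricConfigurations C φ := mem_symmetricConfigurations.2 hsymm
  obtain ⟨v, hv, hv0, hv1⟩ := exists_nontrivial_symmetric_motion hC hm hk hφ hp hspan hcount
  exact hasSymmetricFlex_of_edgeForm_ne_zero hp hfree hv hv0 hv1

end Count

end Framework

/-- Theorem 6.8(ii), half-turn symmetry in dimension `d > 4`:
`C ∈ O(d)` a half-turn (orthogonal involution whose fixed subspace has
dimension `d - 2`), `S = {I, C}`, `Φ(C) = σ` with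
`j_C > b_C/(d-4) + (d(d-7)+8)/(2(d-4))`, and `|E| = d|V| - (d+1 choose 2)`;
then a symmetric framework spanning `ℝ^d` with no nonzero fully symmetric
self-stress has a symmetry-preserving finite flex. -/
theorem stmt_9 {d : ℕ} (hd : 4 < d) {V : Type*} [Fintype V] [DecidableEq V]
    (G : SimpleGraph V) [DecidableRel G.Adj]
    (hcount : G.edgeFinset.card + (d + 1).choose 2 = d * Fintype.card V)
    (C : Euc d ≃ₗᵢ[ℝ] Euc d) (hC2 : ∀ v, C (C v) = v)
    (hhalf : Module.finrank ℝ (fixedSpace C) = d - 2)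
    (σ : Equiv.Perm V) (hσ2 : σ * σ = 1)
    (hσadj : ∀ i j : V, G.Adj (σ i) (σ j) ↔ G.Adj i j)
    (hjb : (((Finset.univ.filter (fun i : V => σ i = i)).card : ℝ)) >
      ((G.edgeFinset.filter (fun e => Sym2.map σ e = e)).card : ℝ) / ((d : ℝ) - 4)
        + ((d : ℝ) * ((d : ℝ) - 7) + 8) / (2 * ((d : ℝ) - 4)))
    (p : V → Euc d) (hp : Function.Injective p)
    (hsym : ∀ i, C (p i) = p (σ i))
    (hspan : affineSpan ℝ (Set.range p) = ⊤)
    (hnostress : ∀ ω : Sym2 V → ℝ,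
      (∀ i : V, ∑ j ∈ G.neighborFinset i, ω s(i, j) • (p i - p j) = 0) →
      (∀ e ∈ G.edgeSet, ω (Sym2.map σ e) = ω e) →
      ∀ e ∈ G.edgeSet, ω e = 0) :
    ∃ P : ℝ → V → Euc d,
      ContinuousOn P (Set.Icc 0 1) ∧
      P 0 = p ∧
      (∀ t ∈ Set.Icc (0:ℝ) 1, ∀ i j : V, G.Adj i j → ‖P t i - P t j‖ = ‖p i - p j‖) ∧
      (∃ k l : V, ∀ t ∈ Set.Ioc (0:ℝ) 1, ‖P t k - P t l‖ ≠ ‖p k - p l‖) ∧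
      (∀ t ∈ Set.Icc (0:ℝ) 1, ∀ i, C (P t i) = P t (σ i)) := by
  have hfix : fixedSpace C = (C.toLinearEquiv : Euc d →ₗ[ℝ] Euc d).fixedSubmodule :=
    (LinearMap.fixedSubmodule_eq_ker _).symm
  have horth : Module.finrank ℝ ↥(fixedSpace C)ᗮ = 2 := by
    have h := (fixedSpace C).finrank_add_finrank_orthogonal
    rw [hhalf, finrank_euclideanSpace_fin] at h
    omega
  exact stmt_9_general (φ := ⟨σ, hσadj _ _⟩) hC2 (hfix ▸ hhalf) (hfix ▸ horth)
    (fun i => Equiv.congr_fun hσ2 i) (halfTurn_count hd hcount hjb) hsym hspan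
    fun ω hω => hnostress ω (congrFun hω)
end
end

section
/- (Lemma 7.1, orbit summation identity for an edge with endpoints in distinct vertex orbits.) Let S be a finite subgroup of O(d), Φ : S → Aut(G) a homomorphism, and (G,p) an S-symmetric framework of type Φ in ℝ^d. Let a, b ∈ V lie in distinct vertex orbits, let x ∈ S, and suppose e = {a, Φ(x)(b)} ∈ E. Set α = |{y ∈ S : Φ(y)(a) = a and Φ(y)(Φ(x)(b)) = Φ(x)(b)}| and let S(e) = {Φ(z)(e) : z ∈ S} be the edge orbit of e. Then Σ_{j ∈ V with {a,j} ∈ S(e)} (p_a − p_j) = (1/α) Σ_{y ∈ S with Φ(y)(a) = a} y(p_a − x(p_b)). -/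
open scoped Classical

noncomputable section

/-!
If `y` fixes `a`, then symmetry gives `y (p a - p c) = p a - p (y • c)`, where `c = x • b`. No group
element carries `c` to `a`, so the vertices `j` with `s(a, j)` in the edge orbit of `s(a, c)` are
exactly the orbit of `c` under the stabilizer of `a`. By the orbit-stabilizer theorem, the sum over
this stabilizer visits each such `j` exactly `α` times.
-/

open MulAction
open scoped Pointwise

section LinearIsometries

variable {R E : Type*} [Ring R] [SeminormedAddCommGroup E] [Module R E]

/-- The tautological action of the linear isometries of `E` on `E`; subgroups of linear isometries
inherit it. -/
instance linearIsometryEquivApplyDistribMulAction : DistribMulAction (E ≃ₗᵢ[R] E) E where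
  smul f v := f v
  one_smul _ := rfl
  mul_smul _ _ _ := rfl
  smul_zero := map_zero
  smul_add := map_add

end LinearIsometries

section Orbits

variable {Γ V : Type*} [Group Γ] [MulAction Γ V]

theorem ncard_setOf_smul_eq_smul (h : Γ) (c : V) :
    {g : Γ | g • c = h • c}.ncard = Nat.card (stabilizer Γ c) := by
  have fiber_eq_coset : {g : Γ | g • c = h • c} = h • (stabilizer Γ c : Set Γ) := by
    ext g
    simp [Set.mem_smul_set_iff_inv_smul_mem, mul_smul, inv_smul_eq_iff]
  rw [fiber_eq_coset, Set.ncard_smul_set]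
  rfl

theorem sum_smul_eq_card_stabilizer_nsmul_sum_orbit {M : Type*} [AddCommMonoid M] [Fintype Γ]
    (f : V → M) (c : V) {O : Finset V} (hO : ∀ j, j ∈ O ↔ j ∈ orbit Γ c) :
    ∑ g : Γ, f (g • c) = Nat.card (stabilizer Γ c) • ∑ j ∈ O, f j := by
  rw [← Finset.sum_fiberwise_of_maps_to (g := (· • c)) (t := O)
    fun g _ => (hO _).2 (mem_orbit c g), Finset.smul_sum]
  refine Finset.sum_congr rfl fun j hj => ?_
  obtain ⟨h, rfl⟩ := (hO j).1 hj
  rw [Finset.sum_congr rfl fun g hg => congrArg f (Finset.mem_filter.1 hg).2, Finset.sum_const,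
    ← ncard_setOf_smul_eq_smul h c, Set.ncard_eq_toFinset_card', Set.toFinset_ofPred]

theorem card_stabilizer_stabilizer (a c : V) :
    Nat.card (stabilizer (stabilizer Γ a) c) = {y : Γ | y • a = a ∧ y • c = c}.ncard :=
  Nat.card_congr (Equiv.subtypeSubtypeEquivSubtypeInter (· ∈ stabilizer Γ a) (· • c = c))

theorem exists_map_smul_eq_iff_mem_orbit_stabilizer {a c : V} (hc : c ∉ orbit Γ a) (j : V) :
    (∃ z : Γ, Sym2.map (z • ·) s(a, c) = s(a, j)) ↔ j ∈ orbit (stabilizer Γ a) c := by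
  have not_smul_eq (z : Γ) : z • c ≠ a := fun hz => hc (mem_orbit_symm.1 ⟨z, hz⟩)
  simp [mem_orbit_iff, Subgroup.smul_def, not_smul_eq]

end Orbits

section EquivariantMaps

variable {Γ V E : Type*} [Group Γ] [Fintype Γ] [MulAction Γ V] [DecidableEq V] [AddCommGroup E]
  [DistribMulAction Γ E]

theorem sum_smul_sub_eq_ncard_nsmul_sum_sub (p : V →[Γ] E) {a c : V} (hc : c ∉ orbit Γ a)
    {N : Finset V} (hN : ∀ j, j ∈ N ↔ ∃ z : Γ, Sym2.map (z • ·) s(a, c) = s(a, j)) :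
    ∑ y : Γ with y • a = a, y • (p a - p c) =
      {y : Γ | y • a = a ∧ y • c = c}.ncard • ∑ j ∈ N, (p a - p j) :=
  calc
    ∑ y : Γ with y • a = a, y • (p a - p c)
      = ∑ y : Γ with y • a = a, (p a - p (y • c)) :=
        Finset.sum_congr rfl fun y hy => by
          rw [smul_sub, ← map_smul, ← map_smul, (Finset.mem_filter.1 hy).2]
    _ = ∑ y : stabilizer Γ a, (p a - p (y • c)) := Finset.sum_subtype _ (by simp) _
    _ = Nat.card (stabilizer (stabilizer Γ a) c) • ∑ j ∈ N, (p a - p j) :=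
        sum_smul_eq_card_stabilizer_nsmul_sum_orbit (p a - p ·) c fun j =>
          (hN j).trans (exists_map_smul_eq_iff_mem_orbit_stabilizer hc j)
    _ = {y : Γ | y • a = a ∧ y • c = c}.ncard • ∑ j ∈ N, (p a - p j) := by
        rw [card_stabilizer_stabilizer]

theorem stmt_13_general {k : Type*} [DivisionRing k] [CharZero k] [Module k E] (p : V →[Γ] E)
    {a b : V} (hb : b ∉ orbit Γ a) (x : Γ) {N : Finset V}
    (hN : ∀ j, j ∈ N ↔ ∃ z : Γ, Sym2.map (z • ·) s(a, x • b) = s(a, j)) :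
    ∑ j ∈ N, (p a - p j) = ({y : Γ | y • a = a ∧ y • x • b = x • b}.ncard : k)⁻¹ •
      ∑ y : Γ with y • a = a, y • (p a - x • p b) := by
  have ncard_ne_zero : ({y : Γ | y • a = a ∧ y • x • b = x • b}.ncard : k) ≠ 0 :=
    Nat.cast_ne_zero.2 (Set.ncard_ne_zero_of_mem (a := 1) (by simp))
  have smul_notMem_orbit : x • b ∉ orbit Γ a := by
    rwa [mem_orbit_symm, orbit_smul, mem_orbit_symm]
  rw [← map_smul, sum_smul_sub_eq_ncard_nsmul_sum_sub p smul_notMem_orbit hN,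
    ← Nat.cast_smul_eq_nsmul k, inv_smul_smul₀ ncard_ne_zero]

end EquivariantMaps

/-- Lemma 7.1, orbit summation identity for an edge with
endpoints in distinct vertex orbits. -/
theorem stmt_13 {d : ℕ} {V : Type*} [Fintype V] [DecidableEq V]
    (G : SimpleGraph V)
    (S : Subgroup (Euc d ≃ₗᵢ[ℝ] Euc d)) [Fintype S]
    (Φ : S →* Equiv.Perm V)
    (hΦadj : ∀ (x : S) (i j : V), G.Adj (Φ x i) (Φ x j) ↔ G.Adj i j)
    (p : V → Euc d) (hp : Function.Injective p)
    (hsym : ∀ (x : S) (i : V), (x : Euc d ≃ₗᵢ[ℝ] Euc d) (p i) = p (Φ x i))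
    (a b : V) (hdist : ∀ z : S, Φ z a ≠ b)
    (x : S) (he : s(a, Φ x b) ∈ G.edgeSet)
    (α : ℕ) (hα : α = Set.ncard {y : S | Φ y a = a ∧ Φ y (Φ x b) = Φ x b}) :
    ∑ j ∈ Finset.univ.filter
        (fun j : V => ∃ z : S, Sym2.map (Φ z) s(a, Φ x b) = s(a, j)),
        (p a - p j)
      = (α : ℝ)⁻¹ •
        ∑ y ∈ Finset.univ.filter (fun y : S => Φ y a = a),
          (y : Euc d ≃ₗᵢ[ℝ] Euc d) (p a - (x : Euc d ≃ₗᵢ[ℝ] Euc d) (p b)) := by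
  let : MulAction S V := MulAction.compHom V Φ
  subst hα
  exact stmt_13_general (⟨p, fun y i => (hsym y i).symm⟩ : V →[S] Euc d)
    (fun ⟨z, hz⟩ => hdist z hz) x fun j => Finset.mem_filter_univ j
end
end

section
/- (Lemma 7.2, orbit summation identity for an edge with both endpoints in one vertex orbit.) Let S be a finite subgroup of O(d), Φ : S → Aut(G) a homomorphism, and (G,p) an S-symmetric framework of type Φ in ℝ^d. Let a ∈ V, x ∈ S with Φ(x)(a) ≠ a, and suppose e = {a, Φ(x)(a)} ∈ E. Set β = |{y ∈ S : Φ(y)(a) = a and Φ(y)(Φ(x)(a)) = Φ(x)(a)}| and let S(e) = {Φ(z)(e) : z ∈ S}. Then there exists α ∈ {β, 2β} — namely α = 2β when some y ∈ S with Φ(y)(a) = a satisfies Φ(y)(Φ(x)(a)) = Φ(x⁻¹)(a), and α = β otherwise — such that Σ_{j ∈ V with {a,j} ∈ S(e)} (p_a − p_j) = (1/α) Σ_{y ∈ S with Φ(y)(a) = a} y(2p_a − x(p_a) − x⁻¹(p_a)). -/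
open scoped Classical

noncomputable section

/-!
Let `H` be the stabilizer of `a`. The neighbours of `a` in the orbit of the edge `{a, x • a}` form
the union of the two `H`-orbits of `x • a` and `x⁻¹ • a`. By the orbit-stabilizer theorem, summing
`f (y • b)` over `y ∈ H` counts every point of the `H`-orbit of `b` as often as the order of the
stabilizer of `b` in `H`, and conjugation by `x` shows that this order is the same number `β` for
`b = x • a` and `b = x⁻¹ • a`. Two orbits are equal or disjoint: if they are equal every neighbour
is counted `2 * β` times, and otherwise `β` times.
-/

section OrbitSums

open MulAction

variable {M V E : Type*} [Group M] [MulAction M V]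

theorem orbitProdStabilizerEquivGroup_symm_fst (b : V) (y : M) :
    (((orbitProdStabilizerEquivGroup M b).symm y).1 : V) = y • b :=
  rfl

theorem finsum_smul_eq_card_stabilizer_nsmul_finsum_orbit [Finite M] [AddCommMonoid E] (b : V)
    (f : V → E) :
    ∑ᶠ y : M, f (y • b) = Nat.card (stabilizer M b) • ∑ᶠ j ∈ orbit M b, f j := by
  have : Fintype (stabilizer M b) := Fintype.ofFinite _
  have : Fintype (orbit M b) := (Finite.finite_mulAction_orbit b).fintype
  calc ∑ᶠ y : M, f (y • b)
      = ∑ᶠ q : orbit M b × stabilizer M b, f q.1 := by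
        simp only [← orbitProdStabilizerEquivGroup_symm_fst]
        exact finsum_comp_equiv (orbitProdStabilizerEquivGroup M b).symm (f := fun q => f q.1)
    _ = Nat.card (stabilizer M b) • ∑ᶠ j ∈ orbit M b, f j := by
        simp only [← finsum_set_coe_eq_finsum_mem, finsum_eq_sum_of_fintype, Fintype.sum_prod_type,
          Finset.sum_const, Finset.smul_sum, Finset.card_univ, Nat.card_eq_fintype_card]

theorem card_stabilizer_stabilizer_s14 (a b : V) :
    Nat.card (stabilizer (stabilizer M a) b) = Nat.card ↥(stabilizer M a ⊓ stabilizer M b) := by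
  have h : stabilizer (stabilizer M a) b = (stabilizer M b).subgroupOf (stabilizer M a) := rfl
  rw [h, ← Subgroup.card_map_of_injective (stabilizer M a).subtype_injective,
    Subgroup.subgroupOf_map_subtype, inf_comm]

theorem card_stabilizer_inf_stabilizer_smul (g : M) (a b : V) :
    Nat.card ↥(stabilizer M (g • a) ⊓ stabilizer M (g • b)) =
      Nat.card ↥(stabilizer M a ⊓ stabilizer M b) := by
  simp only [stabilizer_smul_eq_stabilizer_map_conj]
  rw [← Subgroup.map_inf _ _ _ (MulAut.conj g).injective]
  exact Subgroup.card_map_of_injective (MulAut.conj g).injective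

variable (M) in
/-- The neighbours of `a` along the edges in the `M`-orbit of the edge `{a, b}`. -/
def edgeOrbitNeighbors (a b : V) : Set V :=
  {j | ∃ z : M, Sym2.map (z • ·) s(a, b) = s(a, j)}

/-- The integer `α` of the orbit summation identity for the edge `{a, x • a}`: the order `β` of the
pointwise stabilizer of the edge, doubled when the stabilizer of `a` carries `x • a` to
`x⁻¹ • a`. -/
def edgeMultiplicity (a : V) (x : M) : ℕ :=
  if ∃ y ∈ stabilizer M a, y • x • a = x⁻¹ • a
  then 2 * Nat.card ↥(stabilizer M a ⊓ stabilizer M (x • a))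
  else Nat.card ↥(stabilizer M a ⊓ stabilizer M (x • a))

theorem edgeMultiplicity_ne_zero [Finite M] (a : V) (x : M) : edgeMultiplicity a x ≠ 0 := by
  have hβ : Nat.card ↥(stabilizer M a ⊓ stabilizer M (x • a)) ≠ 0 := Nat.card_pos.ne'
  unfold edgeMultiplicity
  split_ifs
  · exact mul_ne_zero two_ne_zero hβ
  · exact hβ

theorem edgeOrbitNeighbors_smul_eq_union (a : V) (x : M) :
    edgeOrbitNeighbors M a (x • a) =
      orbit (stabilizer M a) (x • a) ∪ orbit (stabilizer M a) (x⁻¹ • a) := by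
  ext j
  simp only [edgeOrbitNeighbors, Set.mem_ofPred_eq, Sym2.map_mk, Sym2.eq_iff, exists_or,
    Set.mem_union, mem_orbit_iff, Subtype.exists, Subgroup.mk_smul, mem_stabilizer_iff,
    exists_prop]
  -- `z` reverses the edge onto `{a, j}` iff `z * x` fixes `a` and carries `x⁻¹ • a` to `j`.
  refine or_congr_right ⟨?_, ?_⟩
  · rintro ⟨z, hza, hzx⟩
    exact ⟨z * x, by rwa [mul_smul], by rwa [mul_smul, smul_inv_smul]⟩
  · rintro ⟨y, hya, hyx⟩
    exact ⟨y * x⁻¹, by rwa [mul_smul], by rwa [mul_smul, inv_smul_smul]⟩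

theorem finsum_stabilizer_smul_add_inv_smul [Finite M] [AddCommMonoid E] (a : V) (x : M)
    (f : V → E) :
    ∑ᶠ y : stabilizer M a, (f (y • x • a) + f (y • x⁻¹ • a)) =
      Nat.card ↥(stabilizer M a ⊓ stabilizer M (x • a)) •
        (∑ᶠ j ∈ orbit (stabilizer M a) (x • a), f j +
          ∑ᶠ j ∈ orbit (stabilizer M a) (x⁻¹ • a), f j) := by
  have hcard : Nat.card ↥(stabilizer M a ⊓ stabilizer M (x⁻¹ • a)) =
      Nat.card ↥(stabilizer M a ⊓ stabilizer M (x • a)) := by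
    rw [← card_stabilizer_inf_stabilizer_smul x, smul_inv_smul, inf_comm]
  rw [finsum_add_distrib (Set.toFinite _) (Set.toFinite _),
    finsum_smul_eq_card_stabilizer_nsmul_finsum_orbit,
    finsum_smul_eq_card_stabilizer_nsmul_finsum_orbit,
    card_stabilizer_stabilizer_s14, card_stabilizer_stabilizer_s14, hcard, smul_add]

theorem edgeMultiplicity_nsmul_finsum_edgeOrbitNeighbors [Finite M] [AddCommMonoid E] (a : V)
    (x : M) (f : V → E) :
    edgeMultiplicity a x • ∑ᶠ j ∈ edgeOrbitNeighbors M a (x • a), f j =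
      ∑ᶠ y : stabilizer M a, (f (y • x • a) + f (y • x⁻¹ • a)) := by
  have hrev : (∃ y ∈ stabilizer M a, y • x • a = x⁻¹ • a) ↔
      x⁻¹ • a ∈ orbit (stabilizer M a) (x • a) := by
    simp [mem_orbit_iff]
  rw [edgeOrbitNeighbors_smul_eq_union, finsum_stabilizer_smul_add_inv_smul, edgeMultiplicity]
  split_ifs with h <;> rw [hrev, ← orbit_eq_iff] at h
  · rw [h, Set.union_self, ← two_nsmul, smul_smul, mul_comm]
  · have hdisj := (orbit.eq_or_disjoint (x • a) (x⁻¹ • a)).resolve_left (Ne.symm h)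
    rw [finsum_mem_union hdisj (Finite.finite_mulAction_orbit _) (Finite.finite_mulAction_orbit _)]

theorem stmt_14_general {K : Type*} [DivisionRing K] [CharZero K] [Finite M] [AddCommGroup E]
    [Module K E] (ρ : M → E →ₗ[K] E) (p : V → E) (hp : ∀ (y : M) (i : V), ρ y (p i) = p (y • i))
    (a : V) (x : M) :
    ∑ᶠ j ∈ edgeOrbitNeighbors M a (x • a), (p a - p j) =
      (edgeMultiplicity a x : K)⁻¹ •
        ∑ᶠ y ∈ stabilizer M a, ρ y ((2 : K) • p a - ρ x (p a) - ρ x⁻¹ (p a)) := by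
  have hterm (y : stabilizer M a) :
      ρ y ((2 : K) • p a - ρ x (p a) - ρ x⁻¹ (p a)) =
        (p a - p (y • x • a)) + (p a - p (y • x⁻¹ • a)) := by
    simp only [two_smul, map_sub, map_add, hp, mem_stabilizer_iff.1 y.2, Subgroup.smul_def]
    abel
  have hsum : ∑ᶠ y ∈ stabilizer M a, ρ y ((2 : K) • p a - ρ x (p a) - ρ x⁻¹ (p a)) =
      (edgeMultiplicity a x : K) • ∑ᶠ j ∈ edgeOrbitNeighbors M a (x • a), (p a - p j) := by
    rw [Nat.cast_smul_eq_nsmul, edgeMultiplicity_nsmul_finsum_edgeOrbitNeighbors,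
      ← finsum_congr hterm]
    exact (finsum_set_coe_eq_finsum_mem _).symm
  rw [hsum, inv_smul_smul₀ (Nat.cast_ne_zero.2 (edgeMultiplicity_ne_zero a x))]

end OrbitSums

/-- Lemma 7.2, orbit summation identity for an edge with both
endpoints in one vertex orbit: `α = 2β` if some `y` fixing `a` maps
`Φ(x)(a)` to `Φ(x⁻¹)(a)`, and `α = β` otherwise. -/
theorem stmt_14 {d : ℕ} {V : Type*} [Fintype V] [DecidableEq V]
    (G : SimpleGraph V)
    (S : Subgroup (Euc d ≃ₗᵢ[ℝ] Euc d)) [Fintype S]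
    (Φ : S →* Equiv.Perm V)
    (hΦadj : ∀ (x : S) (i j : V), G.Adj (Φ x i) (Φ x j) ↔ G.Adj i j)
    (p : V → Euc d) (hp : Function.Injective p)
    (hsym : ∀ (x : S) (i : V), (x : Euc d ≃ₗᵢ[ℝ] Euc d) (p i) = p (Φ x i))
    (a : V) (x : S) (hxa : Φ x a ≠ a)
    (he : s(a, Φ x a) ∈ G.edgeSet)
    (β : ℕ) (hβ : β = Set.ncard {y : S | Φ y a = a ∧ Φ y (Φ x a) = Φ x a}) :
    ∃ α : ℕ,
      ((∃ y : S, Φ y a = a ∧ Φ y (Φ x a) = Φ x⁻¹ a) → α = 2 * β) ∧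
      (¬ (∃ y : S, Φ y a = a ∧ Φ y (Φ x a) = Φ x⁻¹ a) → α = β) ∧
      ∑ j ∈ Finset.univ.filter
          (fun j : V => ∃ z : S, Sym2.map (Φ z) s(a, Φ x a) = s(a, j)),
          (p a - p j)
        = (α : ℝ)⁻¹ •
          ∑ y ∈ Finset.univ.filter (fun y : S => Φ y a = a),
            (y : Euc d ≃ₗᵢ[ℝ] Euc d)
              ((2 : ℝ) • p a - (x : Euc d ≃ₗᵢ[ℝ] Euc d) (p a)
                - ((x⁻¹ : S) : Euc d ≃ₗᵢ[ℝ] Euc d) (p a)) := by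
  let _ : MulAction S V := MulAction.compHom V Φ
  refine ⟨edgeMultiplicity a x, fun h => hβ ▸ if_pos h, fun h => hβ ▸ if_neg h, ?_⟩
  simp only [← finsum_mem_coe_finset, Finset.coe_filter_univ]
  exact stmt_14_general (fun y : S => y.1.toLinearEquiv.toLinearMap) p hsym a x
end
end

section
/- (Theorem 7.3, cokernel of the orbit rigidity matrix.) Let (G,p) be an S-symmetric framework of type Φ in ℝ^d and let ω : E → ℝ be fully (S,Φ)-symmetric. Let V₀ ⊆ V be a set of vertices containing at least one vertex from every vertex orbit of the S-action on V. Then ω is a self-stress of (G,p) if and only if for every i ∈ V₀ the equilibrium equation Σ_{j : {i,j} ∈ E} ω({i,j})(p_i − p_j) = 0 holds. -/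
open scoped Classical

noncomputable section

/-!
The net force exerted by a stress is equivariant under symmetries that preserve the stress, so its
vanishing at one vertex propagates along the whole orbit of that vertex.
-/

section NetForce

variable {R M N V W : Type*} [Ring R] [AddCommGroup M] [Module R M] [AddCommGroup N] [Module R N]

/-- The total force `∑ ω_ij (p_i - p_j)` exerted at the vertex `i` by the edge weights `ω`: the
left-hand side of the equilibrium equation. The weights are a function on all of `Sym2 V`, of which
only the values on edges of `G` enter. -/
def netForce (G : SimpleGraph V) [G.LocallyFinite] (ω : Sym2 V → R) (p : V → M) (i : V) : M :=
  ∑ j ∈ G.neighborFinset i, ω s(i, j) • (p i - p j)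

theorem map_netForce {G : SimpleGraph V} {H : SimpleGraph W} [G.LocallyFinite] [H.LocallyFinite]
    (φ : G ≃g H) (f : M →ₗ[R] N) {p : V → M} {q : W → N} (hpq : ∀ i, f (p i) = q (φ i))
    {ω : Sym2 V → R} {η : Sym2 W → R} (hωη : ∀ e ∈ G.edgeSet, η (e.map φ) = ω e) (i : V) :
    f (netForce G ω p i) = netForce H η q (φ i) := by
  rw [netForce, netForce, map_sum]
  refine Finset.sum_equiv φ.toEquiv (fun j => ?_) (fun j hj => ?_)
  · simp only [SimpleGraph.mem_neighborFinset, RelIso.coe_fn_toEquiv, φ.map_adj_iff]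
  · have weight_eq : η s(φ i, φ j) = ω s(i, j) := hωη s(i, j) ((G.mem_neighborFinset i j).mp hj)
    rw [map_smul, map_sub, hpq, hpq, RelIso.coe_fn_toEquiv, weight_eq]

theorem stmt_15_general {Γ : Type*} (G : SimpleGraph V) [G.LocallyFinite]
    (Φ : Γ → (G ≃g G)) (ρ : Γ → (M →ₗ[R] M))
    (p : V → M) (hsym : ∀ x i, ρ x (p i) = p (Φ x i))
    (ω : Sym2 V → R) (hω : ∀ x, ∀ e ∈ G.edgeSet, ω (e.map (Φ x)) = ω e)
    (V₀ : Set V) (hcover : ∀ i, ∃ j ∈ V₀, ∃ x, Φ x j = i) :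
    (∀ i, netForce G ω p i = 0) ↔ ∀ i ∈ V₀, netForce G ω p i = 0 := by
  refine ⟨fun h i _ => h i, fun h i => ?_⟩
  obtain ⟨j, hj, x, rfl⟩ := hcover i
  rw [← map_netForce (Φ x) (ρ x) (hsym x) (hω x), h j hj, map_zero]

end NetForce

/-- Theorem 7.3, cokernel of the orbit rigidity matrix: a fully
(S,Φ)-symmetric `ω` is a self-stress iff the equilibrium equation holds at a
set `V₀` of representatives of the vertex orbits. -/
theorem stmt_15 {d : ℕ} {V : Type*} [Fintype V] [DecidableEq V]
    (G : SimpleGraph V) [DecidableRel G.Adj]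
    (S : Subgroup (Euc d ≃ₗᵢ[ℝ] Euc d))
    (Φ : S →* Equiv.Perm V)
    (hΦadj : ∀ (x : S) (i j : V), G.Adj (Φ x i) (Φ x j) ↔ G.Adj i j)
    (p : V → Euc d) (hp : Function.Injective p)
    (hsym : ∀ (x : S) (i : V), (x : Euc d ≃ₗᵢ[ℝ] Euc d) (p i) = p (Φ x i))
    (ω : Sym2 V → ℝ)
    (hω : ∀ (x : S), ∀ e ∈ G.edgeSet, ω (Sym2.map (Φ x) e) = ω e)
    (V₀ : Set V) (hcover : ∀ i : V, ∃ j ∈ V₀, ∃ x : S, Φ x j = i) :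
    (∀ i : V, ∑ j ∈ G.neighborFinset i, ω s(i, j) • (p i - p j) = 0) ↔
      (∀ i ∈ V₀, ∑ j ∈ G.neighborFinset i, ω s(i, j) • (p i - p j) = 0) :=
  stmt_15_general G (fun x => ⟨Φ x, hΦadj x _ _⟩) (fun x => (x : Euc d ≃ₗᵢ[ℝ] Euc d).toLinearEquiv)
    p hsym ω hω V₀ hcover
end
end

section
/- (Dimension of the fully symmetric trivial motions for half-turn symmetry, Section 6.1.3.) Let d ≥ 2, let C ∈ O(d) be an orthogonal involution of ℝ^d whose fixed subspace has dimension d − 2 (a half-turn), S = {I, C}, and Φ : S → Aut(G) a homomorphism. Let (G,p) be an S-symmetric framework of type Φ in ℝ^d whose points p_i affinely span ℝ^d. Then the set of fully (S,Φ)-symmetric infinitesimal rigid motions of (G,p) — that is, maps u : V → ℝ^d of the form u_i = A p_i + t with A a skew-symmetric d×d matrix and t ∈ ℝ^d, satisfying x(u_i) = u_{Φ(x)(i)} for all i ∈ V, x ∈ S — is a linear subspace of (ℝ^d)^V of dimension 1 + (d−1)(d−2)/2. -/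
open scoped Classical

noncomputable section

/-!
Since the points affinely span, a rigid motion determines its pair `(A, t)`, and it is fully
symmetric exactly when `A` commutes with `C` and `C t = t`. An orthogonal involution is the
reflection in its fixed space `K`, so the skew-symmetric `A` commuting with it are the sums of a
skew-symmetric operator on `K` and one on `Kᗮ`. With `m = dim K` and `k = dim Kᗮ` the dimension is
therefore `m.choose 2 + k.choose 2 + m = k.choose 2 + (m + 1).choose 2`.
-/

open Module

section FinrankProd

variable {R M N P : Type*} [DivisionRing R]
  [AddCommGroup M] [Module R M] [AddCommGroup N] [Module R N] [AddCommGroup P] [Module R P]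

theorem finrank_map_prod_of_injective {f : M × N →ₗ[R] P} (hf : Function.Injective f)
    (S : Submodule R M) (T : Submodule R N)
    [FiniteDimensional R S] [FiniteDimensional R T] :
    finrank R ((S.prod T).map f) = finrank R S + finrank R T := by
  have hprod : S.prod T = (S.subtype.prodMap T.subtype).range := by
    simp [LinearMap.range_prodMap]
  have hinj : Function.Injective (S.subtype.prodMap T.subtype) :=
    S.subtype_injective.prodMap T.subtype_injective
  rw [← (Submodule.equivMapOfInjective f hf _).finrank_eq, hprod,
    LinearMap.finrank_range_of_inj hinj, finrank_prod]

end FinrankProd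

section SkewAdjoint

theorem map_skewAdjoint_submodule {R A B : Type*} [CommRing R] [StarRing R] [TrivialStar R]
    [Ring A] [StarRing A] [Algebra R A] [StarModule R A]
    [Ring B] [StarRing B] [Algebra R B] [StarModule R B] (e : A ≃⋆ₐ[R] B) :
    (skewAdjoint.submodule R A).map e.toAlgEquiv.toLinearEquiv.toLinearMap =
      skewAdjoint.submodule R B := by
  ext b
  change (∃ a, a ∈ skewAdjoint A ∧ e a = b) ↔ b ∈ skewAdjoint B
  simp only [skewAdjoint.mem_iff]
  constructor
  · rintro ⟨a, ha, rfl⟩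
    rw [← map_star, ha, map_neg]
  · exact fun hb ↦ ⟨e.symm b, by rw [← map_star, hb, map_neg], e.apply_symm_apply b⟩

variable {R ι : Type*} [CommRing R] [StarRing R] [TrivialStar R]

theorem mem_skewAdjoint_matrix_iff {M : Matrix ι ι R} :
    M ∈ skewAdjoint.submodule R (Matrix ι ι R) ↔ ∀ i j, M j i = -M i j := by
  change M ∈ skewAdjoint (Matrix ι ι R) ↔ _
  simp [skewAdjoint.mem_iff, ← Matrix.ext_iff]

/-- Skew-symmetric matrices are freely parametrized by their entries above the diagonal. -/
def skewMatrixEquiv (R ι : Type*) [CommRing R] [StarRing R] [TrivialStar R] [IsAddTorsionFree R]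
    [LinearOrder ι] :
    skewAdjoint.submodule R (Matrix ι ι R) ≃ₗ[R] ({q : ι × ι // q.1 < q.2} → R) where
  toFun M q := M.1 q.1.1 q.1.2
  map_add' _ _ := rfl
  map_smul' _ _ := rfl
  invFun s :=
    ⟨.of fun i j ↦ if h : i < j then s ⟨(i, j), h⟩ else if h : j < i then -s ⟨(j, i), h⟩ else 0, by
      refine mem_skewAdjoint_matrix_iff.2 fun i j ↦ ?_
      rcases lt_trichotomy i j with h | rfl | h <;> simp [*, LT.lt.not_gt]⟩
  left_inv M := by
    have hskew := mem_skewAdjoint_matrix_iff.1 M.2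
    refine Subtype.ext (Matrix.ext fun i j ↦ ?_)
    rcases lt_trichotomy i j with h | rfl | h
    · simp [h]
    · simpa using (self_eq_neg.1 (hskew i i)).symm
    · simp [h, h.not_gt, hskew j i]
  right_inv s := by
    ext q
    simp [q.2]

theorem finrank_skewAdjoint_matrix [Nontrivial R] [IsAddTorsionFree R] [Fintype ι] :
    finrank R (skewAdjoint.submodule R (Matrix ι ι R)) = (Fintype.card ι).choose 2 := by
  let := LinearOrder.lift' _ (Fintype.equivFin ι).injective
  rw [(skewMatrixEquiv R ι).finrank_eq, finrank_fintype_fun_eq_card, Fintype.card_subtype,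
    Fintype.card_product_filter_lt]

variable {E F : Type*} [NormedAddCommGroup E] [InnerProductSpace ℝ E] [FiniteDimensional ℝ E]
  [NormedAddCommGroup F] [InnerProductSpace ℝ F] [FiniteDimensional ℝ F]

variable (E) in
/-- The skew-symmetric operators on `E`, the Lie algebra of the orthogonal group of `E`. -/
def skewOperators : Submodule ℝ (E →ₗ[ℝ] E) :=
  skewAdjoint.submodule ℝ (E →ₗ[ℝ] E)

theorem mem_skewOperators {A : E →ₗ[ℝ] E} : A ∈ skewOperators E ↔ A.adjoint = -A :=
  skewAdjoint.mem_iff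

variable (E) in
theorem finrank_skewOperators : finrank ℝ (skewOperators E) = (finrank ℝ E).choose 2 := by
  let toMatrix := LinearMap.toMatrixOrthonormal (stdOrthonormalBasis ℝ E)
  rw [← LinearEquiv.finrank_map_eq toMatrix.toAlgEquiv.toLinearEquiv, skewOperators,
    map_skewAdjoint_submodule, finrank_skewAdjoint_matrix, Fintype.card_fin]

/-- The map `B ↦ f B f†` from operators on `F` to operators on `E`. For the inclusion `f` of a
subspace it extends operators by zero on the orthogonal complement, and for the adjoint of the
inclusion it compresses operators to the subspace. -/
def conjAdjoint (f : F →ₗ[ℝ] E) : (F →ₗ[ℝ] F) →ₗ[ℝ] (E →ₗ[ℝ] E) where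
  toFun B := f ∘ₗ B ∘ₗ f.adjoint
  map_add' B B' := by simp only [LinearMap.add_comp, LinearMap.comp_add]
  map_smul' c B := by simp only [LinearMap.smul_comp, LinearMap.comp_smul, RingHom.id_apply]

theorem conjAdjoint_apply (f : F →ₗ[ℝ] E) (B : F →ₗ[ℝ] F) :
    conjAdjoint f B = f ∘ₗ B ∘ₗ f.adjoint :=
  rfl

theorem conjAdjoint_mem_skewOperators (f : F →ₗ[ℝ] E) {B : F →ₗ[ℝ] F} (hB : B ∈ skewOperators F) :
    conjAdjoint f B ∈ skewOperators E := by
  rw [mem_skewOperators] at hB ⊢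
  simp [conjAdjoint_apply, hB, LinearMap.comp_assoc]

end SkewAdjoint

section Reflection

theorem eq_reflection_of_involutive {𝕜 E : Type*} [RCLike 𝕜] [NormedAddCommGroup E]
    [InnerProductSpace 𝕜 E] {C : E ≃ₗᵢ[𝕜] E} (hC : Function.Involutive C)
    (K : Submodule 𝕜 E) [K.HasOrthogonalProjection] (hK : ∀ v, v ∈ K ↔ C v = v) :
    C = K.reflection := by
  ext1 v
  have hproj : K.starProjection v = (2⁻¹ : 𝕜) • (v + C v) := by
    refine K.eq_starProjection_of_mem_of_inner_eq_zero ?_ fun w hw ↦ ?_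
    · rw [hK, map_smul, map_add, hC v, add_comm]
    · have hinner : inner 𝕜 (C v) w = inner 𝕜 v w := by
        rw [← C.inner_map_map v w, (hK w).1 hw]
      have hsub : v - (2⁻¹ : 𝕜) • (v + C v) = (2⁻¹ : 𝕜) • (v - C v) := by module
      rw [hsub, inner_smul_left, inner_sub_left, hinner, sub_self, mul_zero]
  rw [K.reflection_apply, hproj]
  module

variable {E : Type*} [NormedAddCommGroup E] [InnerProductSpace ℝ E] [FiniteDimensional ℝ E]
  (K : Submodule ℝ E)

theorem adjoint_subtype : K.subtype.adjoint = K.orthogonalProjectionOnto.toLinearMap :=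
  ((LinearMap.eq_adjoint_iff _ _).2 fun x y ↦
    K.inner_orthogonalProjectionOnto_eq_of_mem_right y x).symm

/-- The operator on `E = K ⊕ Kᗮ` with the given diagonal blocks and zero off-diagonal blocks. -/
def blockDiagonal : ((K →ₗ[ℝ] K) × (Kᗮ →ₗ[ℝ] Kᗮ)) →ₗ[ℝ] (E →ₗ[ℝ] E) :=
  (conjAdjoint K.subtype).coprod (conjAdjoint Kᗮ.subtype)

theorem blockDiagonal_apply_coe (A : K →ₗ[ℝ] K) (B : Kᗮ →ₗ[ℝ] Kᗮ) (x : K) :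
    blockDiagonal K (A, B) x = A x := by
  simp [blockDiagonal, conjAdjoint_apply, adjoint_subtype,
    K.orthogonalProjectionOnto_orthogonal_apply_eq_zero x.2]

theorem blockDiagonal_apply_coe_orthogonal (A : K →ₗ[ℝ] K) (B : Kᗮ →ₗ[ℝ] Kᗮ) (y : Kᗮ) :
    blockDiagonal K (A, B) y = B y := by
  simp [blockDiagonal, conjAdjoint_apply, adjoint_subtype,
    K.orthogonalProjectionOnto_apply_of_mem_orthogonal y.2]

theorem blockDiagonal_injective : Function.Injective (blockDiagonal K) := by
  rintro ⟨A, B⟩ ⟨A', B'⟩ h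
  have hA : A = A' := by
    ext x
    simpa only [blockDiagonal_apply_coe] using LinearMap.congr_fun h (x : E)
  have hB : B = B' := by
    ext y
    simpa only [blockDiagonal_apply_coe_orthogonal] using LinearMap.congr_fun h (y : E)
  rw [hA, hB]

/-- The skew-symmetric operators that commute with a given operator `C`. -/
def skewCentralizer (C : E →ₗ[ℝ] E) : Submodule ℝ (E →ₗ[ℝ] E) :=
  skewOperators E ⊓ (Subalgebra.centralizer ℝ {C}).toSubmodule

theorem mem_skewCentralizer {C A : E →ₗ[ℝ] E} :
    A ∈ skewCentralizer C ↔ A ∈ skewOperators E ∧ C * A = A * C := by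
  simp [skewCentralizer, Subalgebra.mem_centralizer_iff]

theorem linearMap_ext_of_eqOn_orthogonal {F : Type*} [AddCommGroup F] [Module ℝ F]
    {M N : E →ₗ[ℝ] F} (hK : ∀ x : K, M x = N x) (hKperp : ∀ y : Kᗮ, M y = N y) : M = N := by
  ext v
  obtain ⟨x, hx, y, hy, rfl⟩ := K.exists_add_mem_mem_orthogonal v
  rw [map_add, map_add, hK ⟨x, hx⟩, hKperp ⟨y, hy⟩]

theorem reflection_mul_blockDiagonal (q : (K →ₗ[ℝ] K) × (Kᗮ →ₗ[ℝ] Kᗮ)) :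
    K.reflection.toLinearEquiv.toLinearMap * blockDiagonal K q =
      blockDiagonal K q * K.reflection.toLinearEquiv.toLinearMap := by
  obtain ⟨A, B⟩ := q
  refine linearMap_ext_of_eqOn_orthogonal K (fun x ↦ ?_) fun y ↦ ?_
  · simp [blockDiagonal_apply_coe, K.reflection_mem_subspace_eq_self]
  · simp [blockDiagonal_apply_coe_orthogonal,
      K.reflection_mem_subspace_orthogonalComplement_eq_neg]

theorem map_mem_of_reflection_comm {M : E →ₗ[ℝ] E}
    (hM : ∀ v, K.reflection (M v) = M (K.reflection v)) {x : E} (hx : x ∈ K) : M x ∈ K := by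
  rw [← K.reflection_eq_self_iff, hM, K.reflection_mem_subspace_eq_self hx]

theorem coe_conjAdjoint_adjoint_subtype_apply {M : E →ₗ[ℝ] E} {x : K} (hx : M x ∈ K) :
    (conjAdjoint K.subtype.adjoint M x : E) = M x := by
  rw [conjAdjoint_apply, LinearMap.adjoint_adjoint, adjoint_subtype]
  exact Submodule.starProjection_eq_self_iff.2 hx

theorem blockDiagonal_compressions_of_reflection_comm {M : E →ₗ[ℝ] E}
    (hM : ∀ v, K.reflection (M v) = M (K.reflection v)) :
    blockDiagonal K (conjAdjoint K.subtype.adjoint M, conjAdjoint Kᗮ.subtype.adjoint M) = M := by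
  have hMperp (v : E) : Kᗮ.reflection (M v) = M (Kᗮ.reflection v) := by
    rw [K.reflection_orthogonal_apply, K.reflection_orthogonal_apply, hM, map_neg]
  refine linearMap_ext_of_eqOn_orthogonal K (fun x ↦ ?_) fun y ↦ ?_
  · rw [blockDiagonal_apply_coe,
      coe_conjAdjoint_adjoint_subtype_apply K (map_mem_of_reflection_comm K hM x.2)]
  · rw [blockDiagonal_apply_coe_orthogonal,
      coe_conjAdjoint_adjoint_subtype_apply Kᗮ (map_mem_of_reflection_comm Kᗮ hMperp y.2)]

theorem map_blockDiagonal_skewOperators :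
    ((skewOperators K).prod (skewOperators Kᗮ)).map (blockDiagonal K) =
      skewCentralizer K.reflection.toLinearEquiv.toLinearMap := by
  ext M
  rw [mem_skewCentralizer]
  constructor
  · rintro ⟨⟨A, B⟩, ⟨hA, hB⟩, rfl⟩
    exact ⟨add_mem (conjAdjoint_mem_skewOperators _ hA) (conjAdjoint_mem_skewOperators _ hB),
      reflection_mul_blockDiagonal K (A, B)⟩
  · rintro ⟨hskew, hcomm⟩
    exact ⟨(conjAdjoint K.subtype.adjoint M, conjAdjoint Kᗮ.subtype.adjoint M),
      ⟨conjAdjoint_mem_skewOperators _ hskew, conjAdjoint_mem_skewOperators _ hskew⟩,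
      blockDiagonal_compressions_of_reflection_comm K (LinearMap.congr_fun hcomm)⟩

theorem finrank_skewCentralizer_reflection :
    finrank ℝ (skewCentralizer K.reflection.toLinearEquiv.toLinearMap) =
      (finrank ℝ K).choose 2 + (finrank ℝ Kᗮ).choose 2 := by
  rw [← map_blockDiagonal_skewOperators,
    finrank_map_prod_of_injective (blockDiagonal_injective K),
    finrank_skewOperators, finrank_skewOperators]

end Reflection

section AffineMotion

variable {R E V : Type*} [CommRing R] [AddCommGroup E] [Module R E]

/-- The velocity field `i ↦ A (p i) + t` on a configuration `p`, linear in `(A, t)`. -/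
def affineMotion (p : V → E) : ((E →ₗ[R] E) × E) →ₗ[R] (V → E) where
  toFun q i := q.1 (p i) + q.2
  map_add' q r := by
    ext1 i
    simp [add_add_add_comm]
  map_smul' c q := by
    ext1 i
    simp

theorem affineMotion_apply (p : V → E) (A : E →ₗ[R] E) (t : E) (i : V) :
    affineMotion p (A, t) i = A (p i) + t :=
  rfl

theorem affineMotion_injective {p : V → E} (hspan : affineSpan R (Set.range p) = ⊤) :
    Function.Injective (affineMotion (R := R) p) := by
  rintro ⟨A, s⟩ ⟨B, t⟩ h
  have haff : A.toAffineMap + AffineMap.const R E s = B.toAffineMap + AffineMap.const R E t := by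
    refine AffineMap.ext_on hspan ?_
    rintro _ ⟨i, rfl⟩
    exact congrFun h i
  have hst : s = t := by simpa using DFunLike.congr_fun haff 0
  have hAB : A = B := by
    ext v
    simpa [hst] using DFunLike.congr_fun haff v
  rw [hAB, hst]

theorem affineMotion_equivariant_iff {p : V → E} (hspan : affineSpan R (Set.range p) = ⊤)
    {C : E →ₗ[R] E} {σ : V → V} (hsym : ∀ i, C (p i) = p (σ i)) (A : E →ₗ[R] E) (t : E) :
    (∀ i, C (affineMotion p (A, t) i) = affineMotion p (A, t) (σ i)) ↔
      C * A = A * C ∧ C t = t := by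
  have hleft (i : V) : C (affineMotion p (A, t) i) = affineMotion p (C * A, C t) i := by
    simp [affineMotion_apply]
  have hright (i : V) : affineMotion p (A, t) (σ i) = affineMotion p (A * C, t) i := by
    simp [affineMotion_apply, hsym]
  simp only [hleft, hright]
  rw [← funext_iff, (affineMotion_injective hspan).eq_iff, Prod.mk.injEq]

end AffineMotion

section SymmetricRigidMotions

variable {E V : Type*} [NormedAddCommGroup E] [InnerProductSpace ℝ E] [FiniteDimensional ℝ E]

/-- The infinitesimal rigid motions `u` of the configuration `p` satisfying `C (u i) = u (σ i)`,
for a linear map `C` and a map `σ` of the indices. -/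
def symmetricRigidMotions (C : E →ₗ[ℝ] E) (σ : V → V) (p : V → E) : Submodule ℝ (V → E) :=
  LinearMap.eqLocus (C.compLeft V) (LinearMap.funLeft ℝ E σ) ⊓
    ((skewOperators E).prod ⊤).map (affineMotion p)

theorem mem_symmetricRigidMotions {C : E →ₗ[ℝ] E} {σ : V → V} {p u : V → E} :
    u ∈ symmetricRigidMotions C σ p ↔ (∀ i, C (u i) = u (σ i)) ∧
      ∃ A ∈ skewOperators E, ∃ t, affineMotion p (A, t) = u := by
  simp [symmetricRigidMotions, funext_iff]

theorem symmetricRigidMotions_eq_map {p : V → E} (hspan : affineSpan ℝ (Set.range p) = ⊤)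
    {C : E →ₗ[ℝ] E} {σ : V → V} (hsym : ∀ i, C (p i) = p (σ i)) :
    symmetricRigidMotions C σ p =
      ((skewCentralizer C).prod (LinearMap.eqLocus C LinearMap.id)).map (affineMotion p) := by
  ext u
  simp only [mem_symmetricRigidMotions, Submodule.mem_map, Submodule.mem_prod, Prod.exists,
    mem_skewCentralizer, LinearMap.mem_eqLocus, LinearMap.id_apply]
  constructor
  · rintro ⟨hu, A, hA, t, rfl⟩
    obtain ⟨hcomm, hfix⟩ := (affineMotion_equivariant_iff hspan hsym A t).1 hu
    exact ⟨A, t, ⟨⟨hA, hcomm⟩, hfix⟩, rfl⟩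
  · rintro ⟨A, t, ⟨⟨hA, hcomm⟩, hfix⟩, rfl⟩
    exact ⟨(affineMotion_equivariant_iff hspan hsym A t).2 ⟨hcomm, hfix⟩, A, hA, t, rfl⟩

theorem finrank_symmetricRigidMotions_reflection (K : Submodule ℝ E) {p : V → E}
    (hspan : affineSpan ℝ (Set.range p) = ⊤) {σ : V → V}
    (hsym : ∀ i, K.reflection (p i) = p (σ i)) :
    finrank ℝ (symmetricRigidMotions K.reflection.toLinearEquiv.toLinearMap σ p) =
      (finrank ℝ Kᗮ).choose 2 + (finrank ℝ K + 1).choose 2 := by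
  have hfix : LinearMap.eqLocus K.reflection.toLinearEquiv.toLinearMap LinearMap.id = K := by
    ext v
    exact K.reflection_eq_self_iff v
  rw [symmetricRigidMotions_eq_map hspan hsym,
    finrank_map_prod_of_injective (affineMotion_injective hspan),
    finrank_skewCentralizer_reflection, hfix, Nat.choose_succ_succ', Nat.choose_one_right]
  ring

end SymmetricRigidMotions

section Euclidean

variable {d : ℕ}

theorem mem_fixedSpace {C : Euc d ≃ₗᵢ[ℝ] Euc d} {v : Euc d} : v ∈ fixedSpace C ↔ C v = v := by
  simp [fixedSpace, sub_eq_zero]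

theorem finrank_orthogonal_fixedSpace_eq_two (hd : 2 ≤ d) {C : Euc d ≃ₗᵢ[ℝ] Euc d}
    (hhalf : finrank ℝ (fixedSpace C) = d - 2) : finrank ℝ (fixedSpace C)ᗮ = 2 := by
  have hsum := (fixedSpace C).finrank_add_finrank_orthogonal
  rw [hhalf, finrank_euclideanSpace_fin] at hsum
  omega

theorem choose_two_sub_two_add_one (hd : 2 ≤ d) :
    (d - 2 + 1).choose 2 = (d - 1) * (d - 2) / 2 := by
  rw [Nat.choose_two_right, Nat.add_sub_cancel, show d - 2 + 1 = d - 1 by lia]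

theorem toEuclideanLin_mem_skewOperators_iff {A : Matrix (Fin d) (Fin d) ℝ} :
    Matrix.toEuclideanLin A ∈ skewOperators (Euc d) ↔ A.transpose = -A := by
  rw [mem_skewOperators, ← Matrix.toEuclideanLin_conjTranspose_eq_adjoint, ← map_neg,
    EmbeddingLike.apply_eq_iff_eq, Matrix.conjTranspose_eq_transpose_of_trivial]

theorem coe_symmetricRigidMotions_euclidean {V : Type*} (C : Euc d ≃ₗᵢ[ℝ] Euc d) (σ : V → V)
    (p : V → Euc d) :
    (symmetricRigidMotions C.toLinearEquiv.toLinearMap σ p : Set (V → Euc d)) =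
      {u : V → Euc d | (∀ i, C (u i) = u (σ i)) ∧
        ∃ A : Matrix (Fin d) (Fin d) ℝ, Matrix.transpose A = -A ∧
          ∃ t : Euc d, ∀ i, u i = Matrix.toEuclideanLin A (p i) + t} := by
  ext u
  rw [SetLike.mem_coe, mem_symmetricRigidMotions, Matrix.toEuclideanLin.surjective.exists]
  simp only [toEuclideanLin_mem_skewOperators_iff, eq_comm (b := u), funext_iff, affineMotion_apply]
  rfl

theorem stmt_19_general {V : Type*} (C : Euc d ≃ₗᵢ[ℝ] Euc d) (hC2 : ∀ v, C (C v) = v) (σ : V → V)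
    (p : V → Euc d) (hsym : ∀ i, C (p i) = p (σ i))
    (hspan : affineSpan ℝ (Set.range p) = ⊤) :
    ∃ W : Submodule ℝ (V → Euc d),
      (W : Set (V → Euc d)) = {u : V → Euc d |
        (∀ i, C (u i) = u (σ i)) ∧
        ∃ A : Matrix (Fin d) (Fin d) ℝ, Matrix.transpose A = -A ∧
          ∃ t : Euc d, ∀ i, u i = Matrix.toEuclideanLin A (p i) + t} ∧
      finrank ℝ W =
        (finrank ℝ (fixedSpace C)ᗮ).choose 2 + (finrank ℝ (fixedSpace C) + 1).choose 2 := by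
  refine ⟨_, coe_symmetricRigidMotions_euclidean C σ p, ?_⟩
  have hrefl : C = (fixedSpace C).reflection :=
    eq_reflection_of_involutive hC2 _ fun _ ↦ mem_fixedSpace
  generalize fixedSpace C = K at hrefl
  subst hrefl
  exact finrank_symmetricRigidMotions_reflection K hspan hsym

end Euclidean

/-- dimension of the fully symmetric trivial motions for
half-turn symmetry, Section 6.1.3: for `S = {I, C}` with `C` an orthogonal
involution of `ℝ^d` whose fixed subspace has dimension `d - 2`, the fully
(S,Φ)-symmetric infinitesimal rigid motions of a framework whose points
affinely span `ℝ^d` form a linear subspace of `(ℝ^d)^V` of dimension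
`1 + (d-1)(d-2)/2`. -/
theorem stmt_19 {d : ℕ} (hd : 2 ≤ d) {V : Type*} [Fintype V] [DecidableEq V]
    (G : SimpleGraph V)
    (C : Euc d ≃ₗᵢ[ℝ] Euc d) (hC2 : ∀ v, C (C v) = v)
    (hhalf : Module.finrank ℝ (fixedSpace C) = d - 2)
    (σ : Equiv.Perm V) (hσ2 : σ * σ = 1)
    (hσadj : ∀ i j : V, G.Adj (σ i) (σ j) ↔ G.Adj i j)
    (p : V → Euc d) (hp : Function.Injective p)
    (hsym : ∀ i, C (p i) = p (σ i))
    (hspan : affineSpan ℝ (Set.range p) = ⊤) :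
    ∃ W : Submodule ℝ (V → Euc d),
      (W : Set (V → Euc d)) = {u : V → Euc d |
        (∀ i, C (u i) = u (σ i)) ∧
        ∃ A : Matrix (Fin d) (Fin d) ℝ, Matrix.transpose A = -A ∧
          ∃ t : Euc d, ∀ i, u i = Matrix.toEuclideanLin A (p i) + t} ∧
      Module.finrank ℝ W = 1 + (d - 1) * (d - 2) / 2 := by
  simpa only [finrank_orthogonal_fixedSpace_eq_two hd hhalf, hhalf, choose_two_sub_two_add_one hd,
    Nat.choose_self] using stmt_19_general C hC2 σ p hsym hspan
end
end
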